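/- arXiv:1301.1401 — 2 statements merged into one kernel-verified Lean document; each statement's English description precedes it below -/
import Mathlib

section
/- Let p be a prime and m ∈ ℕ. Then K_1(C_{p^m} ⊕ C_p) = 1 + Σ_{k=1}^m 1/p^{k−1} = 1 + (p^m − 1)/(p^m − p^{m−1}). -/
open Finset

/-- `S(I)` is minimal zero-sum: nonempty, zero-sum, and no proper nonempty
subfamily is zero-sum. -/
def IsMinZeroSum {G : Type*} [AddCommGroup G] {ℓ : ℕ} (g : Fin ℓ → G)
    (I : Finset (Fin ℓ)) : Prop :=
  I.Nonempty ∧ ∑ i ∈ I, g i = 0 ∧ ∀ J ⊂ I, J.Nonempty → ∑ i ∈ J, g i ≠ 0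

/-- `P` is an irreducible factorization of the indexed multiset `g`: a partition
of the index set all of whose parts are minimal zero-sum. -/
def IsFactorization {G : Type*} [AddCommGroup G] {ℓ : ℕ} (g : Fin ℓ → G)
    (P : Finpartition (Finset.univ : Finset (Fin ℓ))) : Prop :=
  ∀ I ∈ P.parts, IsMinZeroSum g I

/-- `g` is a unique factorization indexed multiset (UFIM) over `G∖{0}`:
all elements are nonzero and there is exactly one irreducible factorization. -/
def IsUFIM {G : Type*} [AddCommGroup G] {ℓ : ℕ} (g : Fin ℓ → G) : Prop :=
  (∀ i, g i ≠ 0) ∧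
  ∃! P : Finpartition (Finset.univ : Finset (Fin ℓ)), IsFactorization g P

/-- The cross number `k(S) = ∑ 1/ord(g_i)`. -/
noncomputable def crossNum {G : Type*} [AddCommGroup G] {ℓ : ℕ} (g : Fin ℓ → G) : ℝ :=
  ∑ i, (1 : ℝ) / (addOrderOf (g i) : ℝ)

/-- `K₁(G)`: the maximal cross number of a UFIM over `G∖{0}`. -/
noncomputable def K1 (G : Type*) [AddCommGroup G] : ℝ :=
  sSup {x : ℝ | ∃ (ℓ : ℕ) (g : Fin ℓ → G), IsUFIM g ∧ crossNum g = x}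

/-- `N₁(G)`: the maximal length of a UFIM over `G∖{0}`. -/
noncomputable def N1 (G : Type*) [AddCommGroup G] : ℕ :=
  sSup {n : ℕ | ∃ g : Fin n → G, IsUFIM g}

/-- `K(G)`: the maximal cross number of a minimal zero-sum indexed multiset over `G∖{0}`. -/
noncomputable def Kcross (G : Type*) [AddCommGroup G] : ℝ :=
  sSup {x : ℝ | ∃ (ℓ : ℕ) (g : Fin ℓ → G), (∀ i, g i ≠ 0) ∧
    IsMinZeroSum g Finset.univ ∧ crossNum g = x}

/-- `g` is zero-sum free: no nonempty subfamily is zero-sum. -/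
def IsZeroSumFree {G : Type*} [AddCommGroup G] {ℓ : ℕ} (g : Fin ℓ → G) : Prop :=
  ∀ I : Finset (Fin ℓ), I.Nonempty → ∑ i ∈ I, g i ≠ 0

/-- The little cross number `k(G)`: the maximal cross number of a zero-sum free
indexed multiset over `G∖{0}`. -/
noncomputable def littleCross (G : Type*) [AddCommGroup G] : ℝ :=
  sSup {x : ℝ | ∃ (ℓ : ℕ) (g : Fin ℓ → G), (∀ i, g i ≠ 0) ∧
    IsZeroSumFree g ∧ crossNum g = x}


set_option linter.unusedSectionVars false
set_option linter.unusedSimpArgs false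


section GroupAlg

variable {p : ℕ} [Fact p.Prime] {G : Type} [AddCommGroup G]

abbrev RA (p : ℕ) (G : Type) [AddCommGroup G] := AddMonoidAlgebra (ZMod p) G

noncomputable def XX (p : ℕ) {G : Type} [AddCommGroup G] (g : G) : RA p G :=
  AddMonoidAlgebra.single g 1

lemma XX_zero : XX p (0 : G) = 1 := rfl

lemma XX_add (g h : G) : XX p (g + h) = XX p g * XX p h := by
  simp [XX, AddMonoidAlgebra.single_mul_single]

lemma XX_nsmul (n : ℕ) (g : G) : XX p (n • g) = XX p g ^ n := by
  induction n with
  | zero => simp [XX_zero]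
  | succ n ih => rw [succ_nsmul, XX_add, ih, pow_succ]

lemma XX_sum {ι : Type} (g : ι → G) (I : Finset ι) :
    XX p (∑ i ∈ I, g i) = ∏ i ∈ I, XX p (g i) := by
  classical
  induction I using Finset.induction_on with
  | empty => simp [XX_zero]
  | insert a s ha ih => rw [Finset.sum_insert ha, XX_add, ih, Finset.prod_insert ha]

/-- coefficient at zero -/
noncomputable def eps (p : ℕ) (G : Type) [AddCommGroup G] : RA p G →ₗ[ZMod p] ZMod p where
  toFun f := f.coeff 0
  map_add' _ _ := by simp
  map_smul' _ _ := by simp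

open Classical in
lemma eps_XX (g : G) : eps p G (XX p g) = if g = 0 then 1 else 0 := by
  show (AddMonoidAlgebra.single g (1 : ZMod p)).coeff 0 = _
  rw [AddMonoidAlgebra.coeff_single, Finsupp.single_apply]

noncomputable def xx (p : ℕ) {G : Type} [AddCommGroup G] (g : G) : RA p G := 1 - XX p g

lemma xx_zero : xx p (0 : G) = 0 := by simp [xx, XX_zero]

lemma xx_add (g h : G) : xx p (g + h) = xx p g + xx p h - xx p g * xx p h := by
  simp only [xx, XX_add]; ring

/-- augmentation ideal as a subspace -/
noncomputable def JJ (p : ℕ) (G : Type) [AddCommGroup G] : Submodule (ZMod p) (RA p G) :=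
  Submodule.span (ZMod p) (Set.range (xx p))

lemma xx_mem (g : G) : xx p g ∈ JJ p G := Submodule.subset_span ⟨g, rfl⟩

lemma mul_mem_pow {a b : RA p G} {m n : ℕ} (ha : a ∈ JJ p G ^ m) (hb : b ∈ JJ p G ^ n) :
    a * b ∈ JJ p G ^ (m + n) := by
  rw [pow_add]; exact Submodule.mul_mem_mul ha hb

lemma xx_mem1 (g : G) : xx p g ∈ JJ p G ^ 1 := by rw [pow_one]; exact xx_mem g

lemma JJ_sq_le : JJ p G ^ 2 ≤ JJ p G := by
  rw [pow_two, JJ, Submodule.span_mul_span, Submodule.span_le]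
  rintro _ ⟨_, ⟨g, rfl⟩, _, ⟨h, rfl⟩, rfl⟩
  have : xx p g * xx p h = xx p g + xx p h - xx p (g + h) := by rw [xx_add]; ring
  show xx p g * xx p h ∈ JJ p G
  rw [this]
  exact sub_mem (add_mem (xx_mem g) (xx_mem h)) (xx_mem _)

lemma JJ_pow_succ_le {n : ℕ} (hn : 1 ≤ n) : JJ p G ^ (n + 1) ≤ JJ p G ^ n := by
  obtain ⟨k, rfl⟩ := Nat.exists_eq_add_of_le hn
  have : JJ p G ^ (1 + k + 1) = JJ p G ^ k * JJ p G ^ 2 := by rw [← pow_add]; congr 1; omega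
  rw [this, add_comm, pow_succ]
  exact mul_le_mul' le_rfl JJ_sq_le

lemma JJ_pow_le {m n : ℕ} (hm : 1 ≤ m) (h : m ≤ n) : JJ p G ^ n ≤ JJ p G ^ m := by
  induction n, h using Nat.le_induction with
  | base => exact le_rfl
  | succ n hn ih => exact (JJ_pow_succ_le (by omega)).trans ih

lemma xx_nsmul_sub (n : ℕ) (g : G) :
    ∃ y ∈ JJ p G, xx p (n • g) - (n : ZMod p) • xx p g = xx p g * y := by
  induction n with
  | zero => exact ⟨0, zero_mem _, by simp [xx_zero]⟩
  | succ n ih =>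
    obtain ⟨y, hy, h⟩ := ih
    refine ⟨y - xx p (n • g), sub_mem hy (xx_mem _), ?_⟩
    rw [succ_nsmul, xx_add, Nat.cast_succ, add_smul, one_smul, mul_sub, ← h]
    ring

lemma mon_mem {ι : Type} (g : ι → G) (I : Finset ι) :
    ∏ i ∈ I, xx p (g i) ∈ JJ p G ^ #I := by
  classical
  induction I using Finset.induction_on with
  | empty =>
    rw [Finset.prod_empty, Finset.card_empty, pow_zero]
    exact Submodule.one_le.mp le_rfl
  | insert a s ha ih =>
    rw [Finset.prod_insert ha, Finset.card_insert_of_notMem ha, add_comm]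
    exact mul_mem_pow (xx_mem1 _) ih

/-- span of `X^σ(I)`, `I ⊆ A` -/
noncomputable def SS (p : ℕ) {G : Type} [AddCommGroup G] {ι : Type} (g : ι → G) (A : Finset ι) :
    Submodule (ZMod p) (RA p G) :=
  Submodule.span (ZMod p) {z | ∃ I ⊆ A, z = XX p (∑ i ∈ I, g i)}

lemma SS_mono {ι : Type} (g : ι → G) {A B : Finset ι} (h : A ⊆ B) : SS p g A ≤ SS p g B := by
  apply Submodule.span_mono
  rintro z ⟨I, hI, rfl⟩
  exact ⟨I, hI.trans h, rfl⟩

lemma one_mem_SS {ι : Type} (g : ι → G) (A : Finset ι) : (1 : RA p G) ∈ SS p g A :=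
  Submodule.subset_span ⟨∅, by simp, by simp [XX_zero]⟩

lemma mul_mem_SS {ι : Type} [DecidableEq ι] (g : ι → G) {A B : Finset ι} (h : Disjoint A B)
    {a b : RA p G} (ha : a ∈ SS p g A) (hb : b ∈ SS p g B) : a * b ∈ SS p g (A ∪ B) := by
  have h1 : a * b ∈ SS p g A * SS p g B := Submodule.mul_mem_mul ha hb
  refine (?_ : SS p g A * SS p g B ≤ _) h1
  rw [SS, SS, Submodule.span_mul_span]
  apply Submodule.span_mono
  rintro _ ⟨_, ⟨I, hI, rfl⟩, _, ⟨K, hK, rfl⟩, rfl⟩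
  refine ⟨I ∪ K, Finset.union_subset_union hI hK, ?_⟩
  rw [Finset.sum_union (Finset.disjoint_of_subset_left hI (Finset.disjoint_of_subset_right hK h)),
    XX_add]

lemma mon_mem_SS {ι : Type} [DecidableEq ι] (g : ι → G) (A : Finset ι) :
    ∏ i ∈ A, xx p (g i) ∈ SS p g A := by
  induction A using Finset.induction_on with
  | empty => simpa using one_mem_SS g ∅
  | insert a s ha ih =>
    rw [Finset.prod_insert ha, Finset.insert_eq]
    refine mul_mem_SS g (by simpa using ha) ?_ ih
    rw [xx]
    refine sub_mem (one_mem_SS _ _) (Submodule.subset_span ⟨{a}, by simp, by simp⟩)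

lemma eps_mul {ι : Type} [DecidableEq ι] (g : ι → G) {A B : Finset ι}
    (h : ∀ I ⊆ A, ∀ K ⊆ B, ∑ i ∈ I, g i + ∑ i ∈ K, g i = 0 → ∑ i ∈ I, g i = 0)
    {a b : RA p G} (ha : a ∈ SS p g A) (hb : b ∈ SS p g B) :
    eps p G (a * b) = eps p G a * eps p G b := by
  classical
  induction ha using Submodule.span_induction with
  | zero => simp
  | add x y _ _ hx hy => rw [add_mul, map_add, hx, hy, map_add, add_mul]
  | smul t x _ hx => rw [smul_mul_assoc, map_smul, hx, map_smul, smul_mul_assoc]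
  | mem x hx =>
    obtain ⟨I, hI, rfl⟩ := hx
    induction hb using Submodule.span_induction with
    | zero => simp
    | add x y _ _ hx hy => rw [mul_add, map_add, hx, hy, map_add, mul_add]
    | smul t x _ hx => rw [mul_smul_comm, map_smul, hx, map_smul, mul_smul_comm]
    | mem y hy =>
      obtain ⟨K, hK, rfl⟩ := hy
      rw [← XX_add, eps_XX, eps_XX, eps_XX]
      have := h I hI K hK
      by_cases h1 : ∑ i ∈ I, g i = 0
      · simp [h1]
      · rw [if_neg (fun h2 => h1 (this h2)), if_neg h1, zero_mul]

open Classical in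
lemma eps_mon {ι : Type} [DecidableEq ι] (g : ι → G) (A : Finset ι) :
    eps p G (∏ i ∈ A, xx p (g i)) =
      ∑ I ∈ A.powerset, if ∑ i ∈ I, g i = 0 then (-1 : ZMod p) ^ #I else 0 := by
  simp only [xx]
  rw [Finset.prod_sub, map_sum]
  apply Finset.sum_congr rfl
  intro I _
  rw [Finset.prod_const_one, mul_one, ← XX_sum]
  have : (-1 : RA p G) ^ #I * XX p (∑ i ∈ I, g i) = ((-1 : ZMod p) ^ #I) • XX p (∑ i ∈ I, g i) := by
    rw [Algebra.smul_def, map_pow, map_neg, map_one]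
  rw [this, map_smul, eps_XX]
  simp

end GroupAlg


section Combi

variable {G : Type} [AddCommGroup G] {ι : Type} [DecidableEq ι]

/-- Intersection-closed form of unique factorization. -/
def UF (g : ι → G) (s : Finset ι) : Prop :=
  (∀ i ∈ s, g i ≠ 0) ∧ ∑ i ∈ s, g i = 0 ∧
  ∀ I ⊆ s, ∀ K ⊆ s, ∑ i ∈ I, g i = 0 → ∑ i ∈ K, g i = 0 → ∑ i ∈ I ∩ K, g i = 0

def MZ (g : ι → G) (U : Finset ι) : Prop :=
  U.Nonempty ∧ ∑ i ∈ U, g i = 0 ∧ ∀ K ⊆ U, K.Nonempty → ∑ i ∈ K, g i = 0 → K = U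

lemma exists_MZ (g : ι → G) (V : Finset ι) (hV : V.Nonempty) (h0 : ∑ i ∈ V, g i = 0) :
    ∃ U ⊆ V, MZ g U := by
  induction V using Finset.strongInduction with
  | H V ih =>
    by_cases h : ∃ K ⊂ V, K.Nonempty ∧ ∑ i ∈ K, g i = 0
    · obtain ⟨K, hK, hne, hK0⟩ := h
      obtain ⟨U, hU, hM⟩ := ih K hK hne hK0
      exact ⟨U, hU.trans hK.1, hM⟩
    · push Not at h
      refine ⟨V, Finset.Subset.refl _, hV, h0, fun K hK hne hK0 => ?_⟩
      by_contra hc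
      exact h K (lt_of_le_of_ne hK hc) hne hK0

lemma sum_sdiff_zero (g : ι → G) {A B : Finset ι} (h : A ⊆ B) (hA : ∑ i ∈ A, g i = 0)
    (hB : ∑ i ∈ B, g i = 0) : ∑ i ∈ B \ A, g i = 0 := by
  have := Finset.sum_sdiff (f := g) h
  rw [hA, hB, add_zero] at this
  exact this

lemma UF.restrict {g : ι → G} {s A : Finset ι} (h : UF g s) (hA : A ⊆ s)
    (h0 : ∑ i ∈ A, g i = 0) : UF g A :=
  ⟨fun i hi => h.1 i (hA hi), h0, fun I hI K hK => h.2.2 I (hI.trans hA) K (hK.trans hA)⟩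

lemma UF.split {g : ι → G} {s A B : Finset ι} (h : UF g s) (hA : A ⊆ s) (hB : B ⊆ s)
    (hd : Disjoint A B) (hA0 : ∑ i ∈ A, g i = 0) :
    ∀ I ⊆ A, ∀ K ⊆ B, ∑ i ∈ I, g i + ∑ i ∈ K, g i = 0 → ∑ i ∈ I, g i = 0 := by
  intro I hI K hK h0
  have hd' : Disjoint I K := Finset.disjoint_of_subset_left hI (Finset.disjoint_of_subset_right hK hd)
  rw [← Finset.sum_union hd'] at h0
  have := h.2.2 (I ∪ K) (Finset.union_subset (hI.trans hA) (hK.trans hB)) A hA h0 hA0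
  have e : (I ∪ K) ∩ A = I := by
    ext i
    simp only [Finset.mem_inter, Finset.mem_union]
    constructor
    · rintro ⟨h1 | h1, h2⟩
      · exact h1
      · exact absurd (hK h1) (Finset.disjoint_left.mp hd h2)
    · intro h1; exact ⟨Or.inl h1, hI h1⟩
  rwa [e] at this

variable {p : ℕ} [Fact p.Prime]

def Loss (p : ℕ) {G : Type} [AddCommGroup G] {ι : Type} (g : ι → G) (V : Finset ι) (t : ℕ) : Prop :=
  ∃ (n : ℕ) (Q : RA p G), #V ≤ n + t ∧ Q ∈ SS p g V ∧ Q ∈ JJ p G ^ n ∧ eps p G Q ≠ 0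

lemma eps_one : eps p G 1 = 1 := by
  classical
  have := eps_XX (p := p) (0 : G)
  rw [XX_zero] at this
  simpa using this

lemma Loss_empty (g : ι → G) : Loss p g ∅ 0 :=
  ⟨0, 1, by simp, one_mem_SS _ _, by rw [pow_zero]; exact Submodule.one_le.mp le_rfl,
    by rw [eps_one]; exact one_ne_zero⟩

lemma Loss_union {g : ι → G} {s A B : Finset ι} (h : UF g s) (hA : A ⊆ s) (hB : B ⊆ s)
    (hd : Disjoint A B) (hA0 : ∑ i ∈ A, g i = 0) {t t' : ℕ} (h1 : Loss p g A t)
    (h2 : Loss p g B t') : Loss p g (A ∪ B) (t + t') := by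
  obtain ⟨n, Q, hc, hS, hJ, he⟩ := h1
  obtain ⟨n', Q', hc', hS', hJ', he'⟩ := h2
  refine ⟨n + n', Q * Q', ?_, mul_mem_SS g hd hS hS', mul_mem_pow hJ hJ', ?_⟩
  · rw [Finset.card_union_of_disjoint hd]; omega
  · rw [eps_mul g (h.split hA hB hd hA0) hS hS']
    exact mul_ne_zero he he'

lemma eps_mon_free (g : ι → G) {A : Finset ι} (h : ∀ I ⊆ A, ∑ i ∈ I, g i = 0 → I = ∅) :
    eps p G (∏ i ∈ A, xx p (g i)) = 1 := by
  classical
  rw [eps_mon, Finset.sum_eq_single ∅]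
  · simp
  · intro I hI hne
    rw [if_neg]
    intro h0
    exact hne (h I (Finset.mem_powerset.mp hI) h0)
  · simp

lemma eps_mon_MZ (g : ι → G) {U : Finset ι} (h : MZ g U) :
    eps p G (∏ i ∈ U, xx p (g i)) = 1 + (-1) ^ #U := by
  classical
  rw [eps_mon]
  rw [← Finset.sum_subset (s₁ := {∅, U})]
  · rw [Finset.sum_pair h.1.ne_empty.symm]
    simp [h.2.1]
  · intro I hI
    simp only [Finset.mem_insert, Finset.mem_singleton] at hI
    rcases hI with rfl | rfl <;> simp
  · intro I hI hI'
    simp only [Finset.mem_insert, Finset.mem_singleton, not_or] at hI'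
    rw [if_neg]
    intro h0
    exact hI'.2 (h.2.2 I (Finset.mem_powerset.mp hI) (Finset.nonempty_iff_ne_empty.mpr hI'.1) h0)

lemma eps_mon_zero {g : ι → G} {s K U : Finset ι} (h : UF g s) (hK : K ⊆ s) (hU : U ⊆ K)
    (hM : MZ g U) (hodd : (1 : ZMod p) + (-1) ^ #U = 0) :
    eps p G (∏ i ∈ K, xx p (g i)) = 0 := by
  rw [← Finset.prod_sdiff hU, mul_comm,
    eps_mul g (h.split (hU.trans hK) (Finset.sdiff_subset.trans hK) Finset.disjoint_sdiff hM.2.1)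
      (mon_mem_SS g U) (mon_mem_SS g (K \ U)), eps_mon_MZ g hM, hodd, zero_mul]

lemma Loss_even {g : ι → G} {U : Finset ι} (hM : MZ g U) (h : (1 : ZMod p) + (-1) ^ #U ≠ 0) :
    Loss p g U 0 :=
  ⟨#U, _, le_rfl, mon_mem_SS g U, mon_mem g U, by rwa [eps_mon_MZ g hM]⟩

lemma MZ.free {g : ι → G} {U A : Finset ι} (hM : MZ g U) (hA : A ⊂ U) :
    ∀ I ⊆ A, ∑ i ∈ I, g i = 0 → I = ∅ := by
  intro I hI h0
  by_contra hne
  have := hM.2.2 I (hI.trans hA.1) (Finset.nonempty_iff_ne_empty.mpr hne) h0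
  subst this
  exact hA.2 hI

lemma Loss_one {g : ι → G} {U : Finset ι} (hM : MZ g U) : Loss p g U 1 := by
  obtain ⟨i, hi⟩ := hM.1
  refine ⟨#(U.erase i), _, ?_, SS_mono g (Finset.erase_subset i U) (mon_mem_SS g _), mon_mem g _, ?_⟩
  · rw [Finset.card_erase_of_mem hi]; omega
  · rw [eps_mon_free g (hM.free (Finset.erase_ssubset hi))]; exact one_ne_zero

lemma Loss_par {g : ι → G} {U : Finset ι} (hM : MZ g U) {a b : ι} (ha : a ∈ U) (hb : b ∈ U)
    (hab : a ≠ b) {t : ZMod p} (ht : t ≠ 1) (h : xx p (g a) - t • xx p (g b) ∈ JJ p G ^ 2) :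
    Loss p g U 0 := by
  set T := (U.erase a).erase b with hT
  have hb' : b ∈ U.erase a := Finset.mem_erase.mpr ⟨hab.symm, hb⟩
  have ha' : a ∈ U.erase b := Finset.mem_erase.mpr ⟨hab, ha⟩
  have e1 : xx p (g b) * ∏ i ∈ T, xx p (g i) = ∏ i ∈ U.erase a, xx p (g i) :=
    Finset.mul_prod_erase _ (fun i => xx p (g i)) hb'
  have hT' : T = (U.erase b).erase a := by rw [hT, Finset.erase_right_comm]
  have e2 : xx p (g a) * ∏ i ∈ T, xx p (g i) = ∏ i ∈ U.erase b, xx p (g i) := by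
    rw [hT']; exact Finset.mul_prod_erase _ (fun i => xx p (g i)) ha'
  have e3 : (xx p (g a) - t • xx p (g b)) * ∏ i ∈ T, xx p (g i) =
      ∏ i ∈ U.erase b, xx p (g i) - t • ∏ i ∈ U.erase a, xx p (g i) := by
    rw [sub_mul, e2, smul_mul_assoc, e1]
  refine ⟨2 + #T, (xx p (g a) - t • xx p (g b)) * ∏ i ∈ T, xx p (g i), ?_, ?_, ?_, ?_⟩
  · rw [hT, Finset.card_erase_of_mem hb', Finset.card_erase_of_mem ha]; omega
  · rw [e3]
    exact sub_mem (SS_mono g (Finset.erase_subset b U) (mon_mem_SS g _))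
      (Submodule.smul_mem _ _ (SS_mono g (Finset.erase_subset a U) (mon_mem_SS g _)))
  · exact mul_mem_pow h (mon_mem g T)
  · rw [e3, map_sub, map_smul, eps_mon_free g (hM.free (Finset.erase_ssubset ha)),
      eps_mon_free g (hM.free (Finset.erase_ssubset hb))]
    rw [smul_eq_mul, mul_one, sub_ne_zero]
    exact ht.symm

/-- squarefree monomials killed by the functional -/
noncomputable def MM (p : ℕ) {G : Type} [AddCommGroup G] {ι : Type} [DecidableEq ι] (g : ι → G)
    (a b c d : ι) : Submodule (ZMod p) (RA p G) :=
  Submodule.span (ZMod p) {z | ∃ K ⊆ ({a, b, c, d} : Finset ι),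
    (c ∈ K ∨ d ∈ K ∨ (a ∈ K ∧ b ∈ K)) ∧ z = ∏ i ∈ K, xx p (g i)}

lemma Loss_triple {g : ι → G} {s U₁ U₂ U₃ : Finset ι} (h : UF g s) (h1 : U₁ ⊆ s) (h2 : U₂ ⊆ s)
    (h3 : U₃ ⊆ s) (d12 : Disjoint U₁ U₂) (d13 : Disjoint U₁ U₃) (d23 : Disjoint U₂ U₃)
    (M1 : MZ g U₁) (M2 : MZ g U₂) (M3 : MZ g U₃)
    (o1 : (1 : ZMod p) + (-1) ^ #U₁ = 0) (o2 : (1 : ZMod p) + (-1) ^ #U₂ = 0)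
    (o3 : (1 : ZMod p) + (-1) ^ #U₃ = 0) {a b c d : ι} (ha : a ∈ U₁) (hb : b ∈ U₁) (hab : a ≠ b)
    (hc : c ∈ U₂) (hd : d ∈ U₃) {u v : ZMod p} (huv : u + v ≠ 0)
    (hm : u • xx p (g a) + v • xx p (g b) ∈ JJ p G ^ 4 ⊔ MM p g a b c d) :
    Loss p g (U₁ ∪ U₂ ∪ U₃) 0 := by
  classical
  set V := U₁ ∪ U₂ ∪ U₃ with hV
  set F : Finset ι := {a, b, c, d} with hF
  set T := V \ F with hT
  have hac : a ≠ c := fun e => Finset.disjoint_left.mp d12 ha (e ▸ hc)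
  have hbc : b ≠ c := fun e => Finset.disjoint_left.mp d12 hb (e ▸ hc)
  have had : a ≠ d := fun e => Finset.disjoint_left.mp d13 ha (e ▸ hd)
  have hbd : b ≠ d := fun e => Finset.disjoint_left.mp d13 hb (e ▸ hd)
  have hcd : c ≠ d := fun e => Finset.disjoint_left.mp d23 hc (e ▸ hd)
  have hFV : F ⊆ V := by
    intro i hi
    simp only [hF, Finset.mem_insert, Finset.mem_singleton] at hi
    simp only [hV, Finset.mem_union]
    rcases hi with rfl | rfl | rfl | rfl <;> tauto
  have hFc : #F = 4 := by
    rw [hF, Finset.card_insert_of_notMem, Finset.card_insert_of_notMem,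
      Finset.card_insert_of_notMem, Finset.card_singleton] <;> simp [*]
  have hVs : V ⊆ s := Finset.union_subset (Finset.union_subset h1 h2) h3
  have hTV : T ⊆ V := Finset.sdiff_subset
  obtain ⟨q, hq, n, hn, hqn⟩ := Submodule.mem_sup.mp hm
  set y := ∏ i ∈ T, xx p (g i) with hy
  have key : ∀ K ⊆ F, (∏ i ∈ K, xx p (g i)) * y = ∏ i ∈ K ∪ T, xx p (g i) := by
    intro K hK
    rw [Finset.prod_union]
    exact Finset.disjoint_of_subset_left hK Finset.disjoint_sdiff
  have hsub : ∀ K ⊆ F, K ∪ T ⊆ V := fun K hK => Finset.union_subset (hK.trans hFV) hTV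
  have hxa : xx p (g a) * y = ∏ i ∈ {a} ∪ T, xx p (g i) := by
    rw [← key {a} (by simp [hF])]; simp
  have hxb : xx p (g b) * y = ∏ i ∈ {b} ∪ T, xx p (g i) := by
    rw [← key {b} (by simp [hF])]; simp
  -- n part
  have hnS : n * y ∈ SS p g V ∧ eps p G (n * y) = 0 := by
    clear hqn
    induction hn using Submodule.span_induction with
    | zero => simp
    | add x z _ _ hx hz =>
      rw [add_mul]; exact ⟨add_mem hx.1 hz.1, by rw [map_add, hx.2, hz.2, add_zero]⟩
    | smul t x _ hx =>
      rw [smul_mul_assoc]; exact ⟨Submodule.smul_mem _ _ hx.1, by rw [map_smul, hx.2, smul_zero]⟩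
    | mem x hx =>
      obtain ⟨K, hK, hcase, rfl⟩ := hx
      rw [key K hK]
      refine ⟨SS_mono g (hsub K hK) (mon_mem_SS g _), ?_⟩
      have hmem : ∀ i ∈ V, (i ∈ F → i ∈ K) → i ∈ K ∪ T := by
        intro i hi hi'
        by_cases hiF : i ∈ F
        · exact Finset.mem_union_left _ (hi' hiF)
        · exact Finset.mem_union_right _ (Finset.mem_sdiff.mpr ⟨hi, hiF⟩)
      have hKs := (hsub K hK).trans hVs
      rcases hcase with hcK | hdK | ⟨haK, hbK⟩
      · refine eps_mon_zero h hKs (U := U₂) ?_ M2 o2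
        intro i hi
        refine hmem i (by simp [hV, hi]) (fun hiF => ?_)
        simp only [hF, Finset.mem_insert, Finset.mem_singleton] at hiF
        rcases hiF with rfl | rfl | rfl | rfl
        · exact absurd hi (Finset.disjoint_left.mp d12 ha)
        · exact absurd hi (Finset.disjoint_left.mp d12 hb)
        · exact hcK
        · exact absurd hd (Finset.disjoint_left.mp d23 hi)
      · refine eps_mon_zero h hKs (U := U₃) ?_ M3 o3
        intro i hi
        refine hmem i (by simp [hV, hi]) (fun hiF => ?_)
        simp only [hF, Finset.mem_insert, Finset.mem_singleton] at hiF
        rcases hiF with rfl | rfl | rfl | rfl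
        · exact absurd hi (Finset.disjoint_left.mp d13 ha)
        · exact absurd hi (Finset.disjoint_left.mp d13 hb)
        · exact absurd hi (Finset.disjoint_left.mp d23 hc)
        · exact hdK
      · refine eps_mon_zero h hKs (U := U₁) ?_ M1 o1
        intro i hi
        refine hmem i (by simp [hV, hi]) (fun hiF => ?_)
        simp only [hF, Finset.mem_insert, Finset.mem_singleton] at hiF
        rcases hiF with rfl | rfl | rfl | rfl
        · exact haK
        · exact hbK
        · exact absurd hc (Finset.disjoint_left.mp d12 hi)
        · exact absurd hd (Finset.disjoint_left.mp d13 hi)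
  have hfree : ∀ A ⊆ V, c ∉ A → d ∉ A → (a ∉ A ∨ b ∉ A) →
      ∀ I ⊆ A, ∑ i ∈ I, g i = 0 → I = ∅ := by
    intro A hA hcA hdA habA I hI h0
    have t1 : ∀ U ⊆ s, MZ g U → (∃ i ∈ U, i ∉ A) → I ∩ U = ∅ := by
      intro U hU hM ⟨i, hi, hiA⟩
      have z := h.2.2 I ((hI.trans hA).trans hVs) U hU h0 hM.2.1
      by_contra hne
      have := hM.2.2 _ Finset.inter_subset_right (Finset.nonempty_iff_ne_empty.mpr hne) z
      rw [← this] at hi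
      exact hiA (hI (Finset.mem_inter.mp hi).1)
    have i1 := t1 U₁ h1 M1 (by rcases habA with h | h; exacts [⟨a, ha, h⟩, ⟨b, hb, h⟩])
    have i2 := t1 U₂ h2 M2 ⟨c, hc, hcA⟩
    have i3 := t1 U₃ h3 M3 ⟨d, hd, hdA⟩
    have : I = I ∩ V := (Finset.inter_eq_left.mpr (hI.trans hA)).symm
    rw [this, hV, Finset.inter_union_distrib_left, Finset.inter_union_distrib_left, i1, i2, i3]
    simp
  have ea : eps p G (xx p (g a) * y) = 1 := by
    rw [hxa]
    apply eps_mon_free g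
    apply hfree _ (hsub {a} (by simp [hF]))
    · simp [hT, hF, hac.symm]
    · simp [hT, hF, had.symm]
    · right; simp [hT, hF, hab.symm]
  have eb : eps p G (xx p (g b) * y) = 1 := by
    rw [hxb]
    apply eps_mon_free g
    apply hfree _ (hsub {b} (by simp [hF]))
    · simp [hT, hF, hbc.symm]
    · simp [hT, hF, hbd.symm]
    · left; simp [hT, hF, hab]
  have hqy : q * y = u • (xx p (g a) * y) + v • (xx p (g b) * y) - n * y := by
    have : q = u • xx p (g a) + v • xx p (g b) - n := by rw [← hqn]; ring
    rw [this, sub_mul, add_mul, smul_mul_assoc, smul_mul_assoc]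
  refine ⟨4 + #T, q * y, ?_, ?_, mul_mem_pow hq (mon_mem g T), ?_⟩
  · rw [hT, Finset.card_sdiff_of_subset hFV]; omega
  · rw [hqy, hxa, hxb]
    refine sub_mem (add_mem (Submodule.smul_mem _ _ ?_) (Submodule.smul_mem _ _ ?_)) hnS.1
    · exact SS_mono g (hsub {a} (by simp [hF])) (mon_mem_SS g _)
    · exact SS_mono g (hsub {b} (by simp [hF])) (mon_mem_SS g _)
  · rw [hqy, map_sub, map_add, map_smul, map_smul, ea, eb, hnS.2]
    simpa using huv

end Combi


section AlgTwo
variable {p : ℕ} [Fact p.Prime]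

abbrev V2 (p : ℕ) := ZMod p × ZMod p

def dt (g h : V2 p) : ZMod p := g.1 * h.2 - g.2 * h.1

lemma cramer (g h v : V2 p) (hd : dt g h ≠ 0) :
    v = (dt v h / dt g h) • g + (dt g v / dt g h) • h := by
  have e : ∀ a b c : ZMod p, a = b / dt g h + c / dt g h ↔ a * dt g h = b + c := by
    intro a b c; rw [← add_div, eq_div_iff hd]
  ext
  · simp only [Prod.fst_add, Prod.smul_fst, smul_eq_mul, div_mul_eq_mul_div]
    rw [e]; simp only [dt]; ring
  · simp only [Prod.snd_add, Prod.smul_snd, smul_eq_mul, div_mul_eq_mul_div]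
    rw [e]; simp only [dt]; ring

lemma xx_smul_sub (α : ZMod p) (g : V2 p) :
    ∃ y ∈ JJ p (V2 p), xx p (α • g) - α • xx p g = xx p g * y := by
  obtain ⟨y, hy, e⟩ := xx_nsmul_sub (p := p) α.val g
  refine ⟨y, hy, ?_⟩
  rw [← e, ZMod.natCast_zmod_val, ← Nat.cast_smul_eq_nsmul (ZMod p) α.val g, ZMod.natCast_zmod_val]

lemma xx_smul_mem (α : ZMod p) (g : V2 p) : xx p (α • g) - α • xx p g ∈ JJ p (V2 p) ^ 2 := by
  obtain ⟨y, hy, e⟩ := xx_smul_sub (p := p) α g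
  rw [e, pow_two]; exact Submodule.mul_mem_mul (xx_mem g) hy

lemma xx_lin (α β : ZMod p) (g h : V2 p) :
    xx p (α • g + β • h) - (α • xx p g + β • xx p h) ∈ JJ p (V2 p) ^ 2 := by
  have h1 := xx_smul_mem α g
  have h2 := xx_smul_mem β h
  have h3 : xx p (α • g) * xx p (β • h) ∈ JJ p (V2 p) ^ 2 := by
    rw [pow_two]; exact Submodule.mul_mem_mul (xx_mem _) (xx_mem _)
  have := sub_mem (add_mem h1 h2) h3
  rw [xx_add]
  convert this using 1
  abel

lemma JJ_le_of (N : Submodule (ZMod p) (RA p (V2 p))) {g h : V2 p} (hd : dt g h ≠ 0)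
    (hg : xx p g ∈ N) (hh : xx p h ∈ N) (h2 : JJ p (V2 p) ^ 2 ≤ N) : JJ p (V2 p) ≤ N := by
  rw [JJ, Submodule.span_le]
  rintro _ ⟨v, rfl⟩
  have e := xx_lin (dt v h / dt g h) (dt g v / dt g h) g h
  rw [← cramer g h v hd] at e
  have := add_mem (h2 e) (add_mem (N.smul_mem (dt v h / dt g h) hg) (N.smul_mem (dt g v / dt g h) hh))
  rw [sub_add_cancel] at this
  exact this

noncomputable def CM (N : Submodule (ZMod p) (RA p (V2 p))) (r : RA p (V2 p)) :
    Submodule (ZMod p) (RA p (V2 p)) :=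
  N.comap (LinearMap.mulLeft (ZMod p) r)

lemma mem_CM (N : Submodule (ZMod p) (RA p (V2 p))) (r z : RA p (V2 p)) :
    z ∈ CM N r ↔ r * z ∈ N := Iff.rfl

lemma le_CM (N : Submodule (ZMod p) (RA p (V2 p))) (r : RA p (V2 p)) {m n k : ℕ}
    (hr : r ∈ JJ p (V2 p) ^ m) (hk : m + n = k) (h : JJ p (V2 p) ^ k ≤ N) :
    JJ p (V2 p) ^ n ≤ CM N r := by
  intro z hz
  subst hk
  exact h (mul_mem_pow hr hz)

lemma JJ2_le_of (N : Submodule (ZMod p) (RA p (V2 p))) {g h : V2 p} (hd : dt g h ≠ 0)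
    (hgg : xx p g * xx p g ∈ N) (hgh : xx p g * xx p h ∈ N) (hhh : xx p h * xx p h ∈ N)
    (h2 : JJ p (V2 p) ^ 3 ≤ N) : JJ p (V2 p) ^ 2 ≤ N := by
  have k1 : JJ p (V2 p) ≤ CM N (xx p g) :=
    JJ_le_of _ hd hgg hgh (le_CM N _ (xx_mem1 g) rfl h2)
  have k2 : JJ p (V2 p) ≤ CM N (xx p h) :=
    JJ_le_of _ hd (by rw [mem_CM, mul_comm]; exact hgh) hhh (le_CM N _ (xx_mem1 h) rfl h2)
  rw [pow_two, Submodule.mul_le]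
  intro y hy z hz
  have : JJ p (V2 p) ≤ CM N y := JJ_le_of _ hd (by rw [mem_CM, mul_comm]; exact k1 hy)
    (by rw [mem_CM, mul_comm]; exact k2 hy)
    (le_CM N (m := 1) _ (by rwa [pow_one]) rfl h2)
  exact this hz

lemma JJ3_le_of (N : Submodule (ZMod p) (RA p (V2 p))) {g h : V2 p} (hd : dt g h ≠ 0)
    (h1 : xx p g * (xx p g * xx p g) ∈ N) (h2 : xx p g * (xx p g * xx p h) ∈ N)
    (h3 : xx p g * (xx p h * xx p h) ∈ N) (h4 : xx p h * (xx p h * xx p h) ∈ N)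
    (hh : JJ p (V2 p) ^ 4 ≤ N) : JJ p (V2 p) ^ 3 ≤ N := by
  have k1 : JJ p (V2 p) ^ 2 ≤ CM N (xx p g) :=
    JJ2_le_of _ hd h1 h2 h3 (le_CM N _ (xx_mem1 g) rfl hh)
  have k2 : JJ p (V2 p) ^ 2 ≤ CM N (xx p h) :=
    JJ2_le_of _ hd (by rw [mem_CM]; convert h2 using 1; ring)
      (by rw [mem_CM]; convert h3 using 1; ring) h4 (le_CM N _ (xx_mem1 h) rfl hh)
  have e : JJ p (V2 p) ^ 3 = JJ p (V2 p) ^ 2 * JJ p (V2 p) := pow_succ _ 2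
  rw [e, Submodule.mul_le]
  intro y hy z hz
  have : JJ p (V2 p) ≤ CM N y := JJ_le_of _ hd (by rw [mem_CM, mul_comm]; exact k1 hy)
    (by rw [mem_CM, mul_comm]; exact k2 hy)
    (le_CM N (m := 2) _ hy rfl hh)
  exact this hz

lemma alg_key (M : Submodule (ZMod p) (RA p (V2 p))) (h4 : JJ p (V2 p) ^ 4 ≤ M)
    {va vb v2 v3 : V2 p} (dab : dt va vb ≠ 0) (da2 : dt va v2 ≠ 0) (da3 : dt va v3 ≠ 0)
    (d23 : dt v2 v3 ≠ 0)
    (m2 : xx p v2 ∈ M) (m3 : xx p v3 ∈ M) (mab : xx p va * xx p vb ∈ M)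
    (ma2 : xx p va * xx p v2 ∈ M) (ma3 : xx p va * xx p v3 ∈ M) (mb2 : xx p vb * xx p v2 ∈ M)
    (mab2 : xx p va * xx p vb * xx p v2 ∈ M) (mab3 : xx p va * xx p vb * xx p v3 ∈ M)
    (ma23 : xx p va * xx p v2 * xx p v3 ∈ M) (mb23 : xx p vb * xx p v2 * xx p v3 ∈ M) :
    ∃ u v : ZMod p, u + v ≠ 0 ∧ u • xx p va + v • xx p vb ∈ M := by
  have key : ∀ (r y : RA p (V2 p)) (α β : ZMod p) (a b : RA p (V2 p)),
      y - (α • a + β • b) ∈ CM M r → r * y ∈ M → r * b ∈ M → α ≠ 0 → r * a ∈ M := by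
    intro r y α β a b h1 h2 h3 hα
    rw [mem_CM] at h1
    have : α • (r * a) ∈ M := by
      have := sub_mem (sub_mem h2 h1) (M.smul_mem β h3)
      convert this using 1
      simp only [mul_sub, mul_add, mul_smul_comm]; abel
    have := M.smul_mem α⁻¹ this
    rwa [smul_smul, inv_mul_cancel₀ hα, one_smul] at this
  have hq : ∀ (v w : V2 p) , xx p v * xx p w ∈ JJ p (V2 p) ^ 2 := fun v w =>
    mul_mem_pow (m := 1) (n := 1) (xx_mem1 v) (xx_mem1 w)
  -- step 1
  have s1 : JJ p (V2 p) ≤ CM M (xx p vb) := by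
    have e3 := xx_lin (dt v3 v2 / dt va v2) (dt va v3 / dt va v2) va v2
    rw [← cramer va v2 v3 da2] at e3
    have n1 : dt v3 v2 / dt va v2 ≠ 0 := by
      refine div_ne_zero ?_ da2
      intro h; apply d23; simp only [dt] at h ⊢; linear_combination -h
    have n2 : dt va v3 / dt va v2 ≠ 0 := div_ne_zero da3 da2
    have f1 : xx p vb * xx p va * xx p va ∈ M :=
      key _ _ _ _ _ _ (le_CM M _ (hq vb va) rfl h4 e3) (by rwa [mul_comm (xx p vb)])
        (by rwa [mul_comm (xx p vb)]) n1
    have f2 : xx p vb * xx p v2 * xx p v2 ∈ M := by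
      refine key _ (xx p v3) _ (dt v3 v2 / dt va v2) _ (xx p va) (le_CM M _ (n := 2) (hq vb v2) rfl h4 ?_) mb23
        (by convert mab2 using 1; ring) n2
      rwa [add_comm]
    apply JJ_le_of _ da2
    · rw [mem_CM, mul_comm]; exact mab
    · exact mb2
    · apply JJ2_le_of _ da2
      · rw [mem_CM, ← mul_assoc]; exact f1
      · rw [mem_CM]; convert mab2 using 1; ring
      · rw [mem_CM, ← mul_assoc]; exact f2
      · exact le_CM M _ (xx_mem1 _) rfl h4
  -- step 2
  have sp : ∀ v : V2 p, xx p v ∈ M → dt va v ≠ 0 → dt v vb = 0 →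
      ∃ u v : ZMod p, u + v ≠ 0 ∧ u • xx p va + v • xx p vb ∈ M := by
    intro v hv hav h0
    have e := cramer va vb v dab
    rw [h0, zero_div, zero_smul, zero_add] at e
    obtain ⟨y, hy, ey⟩ := xx_smul_sub (dt va v / dt va vb) vb
    rw [← e] at ey
    refine ⟨0, dt va v / dt va vb, by rw [zero_add]; exact div_ne_zero hav dab, ?_⟩
    have s1y : xx p vb * y ∈ M := s1 hy
    have := sub_mem hv s1y
    rw [← ey, sub_sub_cancel] at this
    rwa [zero_smul, zero_add]
  by_cases c2 : dt v2 vb = 0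
  · exact sp v2 m2 da2 c2
  by_cases c3 : dt v3 vb = 0
  · exact sp v3 m3 da3 c3
  have e2 := xx_lin (dt v2 vb / dt va vb) (dt va v2 / dt va vb) va vb
  rw [← cramer va vb v2 dab] at e2
  have e3 := xx_lin (dt v3 vb / dt va vb) (dt va v3 / dt va vb) va vb
  rw [← cramer va vb v3 dab] at e3
  have n2 : dt v2 vb / dt va vb ≠ 0 := div_ne_zero c2 dab
  have n3 : dt v3 vb / dt va vb ≠ 0 := div_ne_zero c3 dab
  have hb : ∀ v, xx p vb * xx p v ∈ M := fun v => s1 (xx_mem v)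
  have hb2 : ∀ v w, xx p vb * (xx p v * xx p w) ∈ M := fun v w =>
    s1 (JJ_sq_le (hq v w))
  have g1 : xx p va * xx p v2 * xx p va ∈ M :=
    key _ _ _ _ _ _ (le_CM M _ (hq va v2) rfl h4 e3) ma23
      (by convert hb2 va v2 using 1; ring) n3
  have g2 : xx p va * xx p va * xx p va ∈ M :=
    key _ _ _ _ _ _ (le_CM M _ (hq va va) rfl h4 e2) (by convert g1 using 1; ring)
      (by convert hb2 va va using 1; ring) n2
  have J3 : JJ p (V2 p) ^ 3 ≤ M := by
    apply JJ3_le_of _ dab _ _ _ _ h4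
    · convert g2 using 1; ring
    · convert hb2 va va using 1; ring
    · convert hb2 va vb using 1; ring
    · convert hb2 vb vb using 1
  have g3 : xx p va * xx p va ∈ M :=
    key _ _ _ _ _ _ (le_CM M _ (xx_mem1 va) rfl J3 e2) ma2
      (by convert hb va using 1; ring) n2
  have J2 : JJ p (V2 p) ^ 2 ≤ M := by
    apply JJ2_le_of _ dab g3 mab (hb vb) J3
  have r2 := sub_mem m2 (J2 e2)
  have r3 := sub_mem m3 (J2 e3)
  rw [sub_sub_cancel] at r2 r3
  by_cases z2 : dt v2 vb / dt va vb + dt va v2 / dt va vb = 0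
  · by_cases z3 : dt v3 vb / dt va vb + dt va v3 / dt va vb = 0
    · exfalso
      apply d23
      rw [cramer va vb v2 dab, cramer va vb v3 dab]
      rw [add_eq_zero_iff_eq_neg'] at z2 z3
      rw [z2, z3]
      simp only [dt, Prod.fst_add, Prod.snd_add, Prod.smul_fst, Prod.smul_snd, smul_eq_mul]
      ring
    · exact ⟨_, _, z3, r3⟩
  · exact ⟨_, _, z2, r2⟩

/-- nilpotency -/
lemma xx_pow_p (g : V2 p) : xx p g ^ p = 0 := by
  have : CharP (RA p (V2 p)) p := by
    exact charP_of_injective_algebraMap (algebraMap (ZMod p) (RA p (V2 p))).injective p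
  rw [xx, sub_pow_char, one_pow, ← XX_nsmul]
  have : p • g = 0 := by ext <;> simp
  rw [this, XX_zero, sub_self]

lemma JJ_nil {n : ℕ} (hn : 2 * p - 1 ≤ n) (z : RA p (V2 p)) (hz : z ∈ JJ p (V2 p) ^ n) : z = 0 := by
  have hp := (Fact.out : p.Prime).two_le
  set e1 : V2 p := (1, 0)
  set e2 : V2 p := (0, 1)
  set I : Ideal (RA p (V2 p)) := Ideal.span {xx p e1}
  set K : Ideal (RA p (V2 p)) := Ideal.span {xx p e2}
  have hI : I ^ p = ⊥ := by
    rw [Ideal.span_singleton_pow, xx_pow_p]; simp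
  have hK : K ^ p = ⊥ := by
    rw [Ideal.span_singleton_pow, xx_pow_p]; simp
  have h1 : ∀ v : V2 p, xx p v ∈ I ⊔ K := by
    intro v
    have e : v = v.1 • e1 + v.2 • e2 := by ext <;> simp [e1, e2]
    have hm : ∀ (α : ZMod p) (g : V2 p), xx p (α • g) ∈ Ideal.span {xx p g} := by
      intro α g
      obtain ⟨y, -, ey⟩ := xx_smul_sub α g
      rw [sub_eq_iff_eq_add] at ey
      rw [ey]
      refine add_mem (Ideal.mul_mem_right _ _ (Ideal.mem_span_singleton_self _)) ?_
      rw [Algebra.smul_def]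
      exact Ideal.mul_mem_left _ _ (Ideal.mem_span_singleton_self _)
    rw [e, xx_add]
    refine sub_mem (add_mem ((le_sup_left : I ≤ _) (hm _ _)) ((le_sup_right : K ≤ _) (hm _ _))) ?_
    exact Ideal.mul_mem_right _ _ ((le_sup_left : I ≤ _) (hm _ _))
  have h2 : JJ p (V2 p) ≤ (I ⊔ K).restrictScalars (ZMod p) := by
    rw [JJ, Submodule.span_le]
    rintro _ ⟨v, rfl⟩
    exact h1 v
  have h3 : ∀ n, ∀ z ∈ JJ p (V2 p) ^ n, z ∈ (I ⊔ K) ^ n := by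
    intro n
    induction n with
    | zero => intro z _; simp
    | succ n ih =>
      intro z hz
      rw [pow_succ] at hz
      refine Submodule.mul_induction_on hz ?_ ?_
      · intro a ha b hb
        rw [pow_succ]
        exact Ideal.mul_mem_mul (ih a ha) (h2 hb)
      · intro a b ha hb; exact add_mem ha hb
  have h4 := h3 n z hz
  have h5 : (I ⊔ K) ^ n = ⊥ := by
    rw [← Ideal.add_eq_sup, add_pow, ← Ideal.zero_eq_bot]
    apply Finset.sum_eq_zero
    intro k hk
    have : p ≤ k ∨ p ≤ n - k := by omega
    rcases this with h | h
    · rw [← Nat.sub_add_cancel h, pow_add, hI]; simp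
    · rw [← Nat.sub_add_cancel h, pow_add, hK]; simp
  rw [h5] at h4
  exact h4

lemma Loss_card {ι : Type} [DecidableEq ι] {g : ι → V2 p} {V : Finset ι} {t : ℕ}
    (h : Loss p g V t) : #V ≤ 2 * p - 2 + t := by
  obtain ⟨n, Q, h1, -, h3, h4⟩ := h
  by_contra hc
  have hp := (Fact.out : p.Prime).two_le
  apply h4
  rw [JJ_nil (by omega) Q h3, map_zero]

end AlgTwo


section HLemma
variable {p : ℕ} [Fact p.Prime] {ι : Type} [DecidableEq ι]

lemma dt_par {v w : V2 p} (hw : w ≠ 0) (h : dt v w = 0) : ∃ t : ZMod p, v = t • w := by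
  simp only [dt] at h
  by_cases h1 : w.1 = 0
  · have h2 : w.2 ≠ 0 := by
      intro h2; exact hw (Prod.ext h1 h2)
    rw [h1, mul_zero, sub_zero] at h
    have h3 : v.1 = 0 := by simpa [h2] using h
    refine ⟨v.2 / w.2, Prod.ext ?_ ?_⟩
    · simp [h1, h3]
    · simp [h2]
  · refine ⟨v.1 / w.1, Prod.ext ?_ ?_⟩
    · simp [h1]
    · simp only [Prod.smul_snd, smul_eq_mul]
      field_simp
      linear_combination -h

lemma dt_swap (v w : V2 p) : dt v w = - dt w v := by simp only [dt]; ring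

lemma dt_comm0 {v w : V2 p} (h : dt v w = 0) : dt w v = 0 := by rw [dt_swap, h, neg_zero]

lemma dt_comm1 {v w : V2 p} (h : dt v w ≠ 0) : dt w v ≠ 0 := fun h' => h (dt_comm0 h')

lemma dt_smul_left (t : ZMod p) (v w : V2 p) : dt (t • v) w = t * dt v w := by
  simp only [dt, Prod.smul_fst, Prod.smul_snd, smul_eq_mul]; ring

lemma dt_trans {u v w : V2 p} (hv : v ≠ 0) (h1 : dt u v = 0) (h2 : dt v w = 0) : dt u w = 0 := by
  obtain ⟨t, rfl⟩ := dt_par hv h1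
  rw [dt_smul_left, h2, mul_zero]

lemma dt_add_left (u v w : V2 p) : dt (u + v) w = dt u w + dt v w := by
  simp only [dt, Prod.fst_add, Prod.snd_add]; ring

lemma dt_zero_left (w : V2 p) : dt 0 w = 0 := by simp [dt]
lemma dt_zero_right (w : V2 p) : dt w 0 = 0 := by simp [dt]

lemma dt_sum_left (g : ι → V2 p) (A : Finset ι) (w : V2 p) (h : ∀ i ∈ A, dt (g i) w = 0) :
    dt (∑ i ∈ A, g i) w = 0 := by
  induction A using Finset.induction_on with
  | empty => simp [dt]
  | insert a s ha ih =>
    rw [Finset.sum_insert ha, dt_add_left, h a (by simp), ih (fun i hi => h i (by simp [hi])), add_zero]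

lemma dt_both {x y v : V2 p} (h : dt x y ≠ 0) (h1 : dt v x = 0) (h2 : dt v y = 0) : v = 0 := by
  have := cramer x y v h
  rw [h2, dt_comm0 h1] at this
  simpa using this

def Bad (p : ℕ) [Fact p.Prime] (g : ι → V2 p) (U : Finset ι) : Prop := MZ g U ∧ ¬ Loss p g U 0

lemma Bad.odd {g : ι → V2 p} {U : Finset ι} (h : Bad p g U) : (1 : ZMod p) + (-1) ^ #U = 0 := by
  by_contra hc; exact h.2 (Loss_even h.1 hc)

lemma Bad.par {g : ι → V2 p} {U : Finset ι} (h : Bad p g U) {a b : ι} (ha : a ∈ U) (hb : b ∈ U)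
    (hb0 : g b ≠ 0) (hd : dt (g a) (g b) = 0) : g a = g b := by
  obtain ⟨t, ht⟩ := dt_par hb0 hd
  by_cases hab : a = b
  · rw [hab]
  by_cases h1 : t = 1
  · rw [ht, h1, one_smul]
  · exfalso
    refine h.2 (Loss_par h.1 ha hb hab h1 ?_)
    rw [ht]; exact xx_smul_mem t (g b)

def NC (g : ι → V2 p) (U : Finset ι) : Prop := ∃ a ∈ U, ∃ b ∈ U, dt (g a) (g b) ≠ 0

lemma NC.pick {g : ι → V2 p} {U : Finset ι} (h : NC g U) {v : V2 p} (hv : v ≠ 0) :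
    ∃ w ∈ U, dt (g w) v ≠ 0 := by
  obtain ⟨a, ha, b, hb, hab⟩ := h
  by_contra! hc
  exact hab (dt_trans hv (hc a ha) (dt_comm0 (hc b hb)))

lemma three_lines {g : ι → V2 p} {U : Finset ι} (hM : MZ g U) (h : NC g U) {x y : V2 p}
    (hxy : dt x y ≠ 0) : ∃ w ∈ U, dt (g w) x ≠ 0 ∧ dt (g w) y ≠ 0 := by
  classical
  by_contra! hc
  have hx : x ≠ 0 := by rintro rfl; exact hxy (dt_zero_left y)
  have hy : y ≠ 0 := by rintro rfl; exact hxy (dt_zero_right x)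
  set A := U.filter (fun i => dt (g i) x = 0) with hA
  have hAU : A ⊆ U := Finset.filter_subset _ _
  have h1 : dt (∑ i ∈ A, g i) x = 0 := dt_sum_left g A x (fun i hi => (Finset.mem_filter.mp hi).2)
  have h2 : dt (∑ i ∈ U \ A, g i) y = 0 := dt_sum_left g _ y (fun i hi => by
    have hi' := Finset.mem_sdiff.mp hi
    exact hc i hi'.1 (fun h0 => hi'.2 (Finset.mem_filter.mpr ⟨hi'.1, h0⟩)))
  have h3 := Finset.sum_sdiff (f := g) hAU
  rw [hM.2.1] at h3
  have h4 : dt (∑ i ∈ A, g i) y = 0 := by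
    have := dt_add_left (∑ i ∈ U \ A, g i) (∑ i ∈ A, g i) y
    rw [h3, h2, dt_zero_left, zero_add] at this
    exact this.symm
  have h5 := dt_both hxy h1 h4
  rcases A.eq_empty_or_nonempty with he | hne
  · obtain ⟨w, hw, hwy⟩ := h.pick hy
    refine hwy (hc w hw ?_)
    intro h0
    have : w ∈ A := Finset.mem_filter.mpr ⟨hw, h0⟩
    rw [he] at this; simp at this
  · have := hM.2.2 A hAU hne h5
    obtain ⟨w, hw, hwx⟩ := h.pick hx
    rw [← this] at hw
    exact hwx (Finset.mem_filter.mp hw).2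

lemma UF.no_neg {G : Type} [AddCommGroup G] {g : ι → G} {s W J : Finset ι} (h : UF g s) (hW : W ⊆ s)
    (hW0 : ∑ i ∈ W, g i = 0) {i : ι} (hi : i ∈ s) (hiW : i ∉ W) (hJ : J ⊆ W)
    (hs : ∑ j ∈ J, g j = - g i) : False := by
  have hiJ : i ∉ J := fun hh => hiW (hJ hh)
  have h1 : ∑ j ∈ insert i J, g j = 0 := by rw [Finset.sum_insert hiJ, hs, add_neg_cancel]
  have h2 := h.2.2 (insert i J) (Finset.insert_subset hi (hJ.trans hW)) W hW h1 hW0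
  rw [Finset.insert_inter_of_notMem hiW, Finset.inter_eq_left.mpr hJ, hs, neg_eq_zero] at h2
  exact h.1 i hi h2

lemma const_sub {g : ι → V2 p} {U : Finset ι} (hB : Bad p g U) (h : ¬ NC g U)
    (h0 : ∀ i ∈ U, g i ≠ 0) {a : ι} (ha : a ∈ U) (n : ZMod p) : ∃ J ⊆ U, ∑ j ∈ J, g j = n • g a := by
  have hc : ∀ i ∈ U, g i = g a := by
    intro i hi
    refine hB.par hi ha (h0 a ha) ?_
    by_contra hne; exact h ⟨i, hi, a, ha, hne⟩
  have hcard : ((#U : ℕ) : ZMod p) • g a = 0 := by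
    have := hB.1.2.1
    rw [Finset.sum_congr rfl hc, Finset.sum_const] at this
    rwa [Nat.cast_smul_eq_nsmul]
  have hcard' : ((#U : ℕ) : ZMod p) = 0 := by
    rcases smul_eq_zero.mp hcard with h | h
    · exact h
    · exact absurd h (h0 a ha)
  rw [ZMod.natCast_eq_zero_iff] at hcard'
  have hle : p ≤ #U := Nat.le_of_dvd (Finset.card_pos.mpr ⟨a, ha⟩) hcard'
  obtain ⟨J, hJ, hJc⟩ := Finset.exists_subset_card_eq (s := U) (n := n.val)
    ((ZMod.val_lt n).le.trans hle)
  refine ⟨J, hJ, ?_⟩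
  rw [Finset.sum_congr rfl (fun i hi => hc i (hJ hi)), Finset.sum_const, hJc,
    ← Nat.cast_smul_eq_nsmul (ZMod p), ZMod.natCast_zmod_val]

lemma const_nonpar {g : ι → V2 p} {s U : Finset ι} (hu : UF g s) (hU : U ⊆ s) (hB : Bad p g U)
    (h : ¬ NC g U) {a i : ι} (ha : a ∈ U) (hi : i ∈ s) (hiU : i ∉ U) : dt (g i) (g a) ≠ 0 := by
  intro h0
  obtain ⟨t, ht⟩ := dt_par (hu.1 a (hU ha)) h0
  obtain ⟨J, hJ, hJs⟩ := const_sub hB h (fun i hi => hu.1 i (hU hi)) ha (-t)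
  exact hu.no_neg hU hB.1.2.1 hi hiU hJ (by rw [hJs, ht, neg_smul])

lemma const_two {g : ι → V2 p} {s U V : Finset ι} (hu : UF g s) (hU : U ⊆ s) (hV : V ⊆ s)
    (hd : Disjoint U V) (hB : Bad p g U) (hB' : Bad p g V)
    (h : ¬ NC g U) (h' : ¬ NC g V) {i : ι} (hi : i ∈ s) (hiU : i ∉ U) (hiV : i ∉ V) : False := by
  obtain ⟨a, ha⟩ := hB.1.1
  obtain ⟨b, hb⟩ := hB'.1.1
  have hab : dt (g b) (g a) ≠ 0 :=
    const_nonpar hu hU hB h ha (hV hb) (fun hh => Finset.disjoint_left.mp hd hh hb)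
  have hc := cramer (g b) (g a) (- g i) hab
  obtain ⟨J, hJ, hJs⟩ := const_sub hB h (fun i hi => hu.1 i (hU hi)) ha (dt (g b) (- g i) / dt (g b) (g a))
  obtain ⟨K, hK, hKs⟩ := const_sub hB' h' (fun i hi => hu.1 i (hV hi)) hb (dt (- g i) (g a) / dt (g b) (g a))
  have hdJK : Disjoint K J := Finset.disjoint_of_subset_left hK (Finset.disjoint_of_subset_right hJ hd.symm)
  refine hu.no_neg (W := V ∪ U) (J := K ∪ J) (Finset.union_subset hV hU) ?_ hi ?_
    (Finset.union_subset_union hK hJ) ?_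
  · rw [Finset.sum_union hd.symm, hB.1.2.1, hB'.1.2.1, add_zero]
  · simp [hiU, hiV]
  · rw [Finset.sum_union hdJK, hJs, hKs]; exact hc.symm

lemma three_bad {g : ι → V2 p} {s U₁ U₂ U₃ : Finset ι} (h : UF g s) (h1 : U₁ ⊆ s) (h2 : U₂ ⊆ s)
    (h3 : U₃ ⊆ s) (d12 : Disjoint U₁ U₂) (d13 : Disjoint U₁ U₃) (d23 : Disjoint U₂ U₃)
    (M1 : Bad p g U₁) (M2 : Bad p g U₂) (M3 : Bad p g U₃) (hn : NC g U₁) :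
    Loss p g (U₁ ∪ U₂ ∪ U₃) 0 := by
  have hcd : ∃ c ∈ U₂, ∃ d ∈ U₃, dt (g c) (g d) ≠ 0 := by
    obtain ⟨c, hc⟩ := M2.1.1
    obtain ⟨d, hd⟩ := M3.1.1
    by_cases n2 : NC g U₂
    · obtain ⟨w, hw, hw'⟩ := n2.pick (h.1 d (h3 hd))
      exact ⟨w, hw, d, hd, hw'⟩
    · exact ⟨c, hc, d, hd, dt_comm1 (const_nonpar h h2 M2 n2 hc (h3 hd)
        (fun hh => Finset.disjoint_left.mp d23 hh hd))⟩
  obtain ⟨c, hc, d, hd, hcd⟩ := hcd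
  obtain ⟨a, ha, hac, had⟩ := three_lines M1.1 hn hcd
  obtain ⟨b, hb, hba⟩ := hn.pick (h.1 a (h1 ha))
  have nab : a ≠ b := by
    rintro rfl; apply hba; simp only [dt]; ring
  have nac : a ≠ c := fun e => Finset.disjoint_left.mp d12 ha (e ▸ hc)
  have nad : a ≠ d := fun e => Finset.disjoint_left.mp d13 ha (e ▸ hd)
  have nbc : b ≠ c := fun e => Finset.disjoint_left.mp d12 hb (e ▸ hc)
  have nbd : b ≠ d := fun e => Finset.disjoint_left.mp d13 hb (e ▸ hd)
  have ncd : c ≠ d := fun e => Finset.disjoint_left.mp d23 hc (e ▸ hd)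
  have mem : ∀ K ⊆ ({a, b, c, d} : Finset ι), (c ∈ K ∨ d ∈ K ∨ (a ∈ K ∧ b ∈ K)) →
      ∏ i ∈ K, xx p (g i) ∈ JJ p (V2 p) ^ 4 ⊔ MM p g a b c d := fun K hK hh =>
    (le_sup_right : _ ≤ JJ p (V2 p) ^ 4 ⊔ MM p g a b c d)
      (Submodule.subset_span ⟨K, hK, hh, rfl⟩)
  have two : ∀ x y : ι, x ≠ y → ∏ i ∈ ({x, y} : Finset ι), xx p (g i) = xx p (g x) * xx p (g y) :=
    fun x y hxy => Finset.prod_pair hxy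
  have three : ∀ x y z : ι, x ≠ y → x ≠ z → y ≠ z → ∏ i ∈ ({x, y, z} : Finset ι), xx p (g i) =
      xx p (g x) * xx p (g y) * xx p (g z) := by
    intro x y z hxy hxz hyz
    rw [Finset.prod_insert (by simp [hxy, hxz]), Finset.prod_pair hyz, mul_assoc]
  have sub : ∀ x y z : ι, x ∈ ({a, b, c, d} : Finset ι) → y ∈ ({a, b, c, d} : Finset ι) →
      z ∈ ({a, b, c, d} : Finset ι) → ({x, y, z} : Finset ι) ⊆ {a, b, c, d} := by
    intro x y z hx hy hz w hw
    simp only [Finset.mem_insert, Finset.mem_singleton] at hw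
    rcases hw with rfl | rfl | rfl <;> assumption
  have sub2 : ∀ x y : ι, x ∈ ({a, b, c, d} : Finset ι) → y ∈ ({a, b, c, d} : Finset ι) →
      ({x, y} : Finset ι) ⊆ {a, b, c, d} := by
    intro x y hx hy w hw
    simp only [Finset.mem_insert, Finset.mem_singleton] at hw
    rcases hw with rfl | rfl <;> assumption
  obtain ⟨u, v, huv, hm⟩ := alg_key (JJ p (V2 p) ^ 4 ⊔ MM p g a b c d) le_sup_left
    (dt_comm1 hba) hac had hcd
    (by have := mem {c} (by simp) (by simp); simpa using this)
    (by have := mem {d} (by simp) (by simp); simpa using this)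
    (by rw [← two _ _ nab]; exact mem _ (sub2 _ _ (by simp) (by simp)) (by simp))
    (by rw [← two _ _ nac]; exact mem _ (sub2 _ _ (by simp) (by simp)) (by simp))
    (by rw [← two _ _ nad]; exact mem _ (sub2 _ _ (by simp) (by simp)) (by simp))
    (by rw [← two _ _ nbc]; exact mem _ (sub2 _ _ (by simp) (by simp)) (by simp))
    (by rw [← three _ _ _ nab nac nbc]; exact mem _ (sub _ _ _ (by simp) (by simp) (by simp)) (by simp))
    (by rw [← three _ _ _ nab nad nbd]; exact mem _ (sub _ _ _ (by simp) (by simp) (by simp)) (by simp))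
    (by rw [← three _ _ _ nac nad ncd]; exact mem _ (sub _ _ _ (by simp) (by simp) (by simp)) (by simp))
    (by rw [← three _ _ _ nbc nbd ncd]; exact mem _ (sub _ _ _ (by simp) (by simp) (by simp)) (by simp))
  exact Loss_triple h h1 h2 h3 d12 d13 d23 M1.1 M2.1 M3.1 M1.odd M2.odd M3.odd ha hb nab hc hd huv hm

lemma three_bad_all {g : ι → V2 p} {s U₁ U₂ U₃ : Finset ι} (h : UF g s) (h1 : U₁ ⊆ s) (h2 : U₂ ⊆ s)
    (h3 : U₃ ⊆ s) (d12 : Disjoint U₁ U₂) (d13 : Disjoint U₁ U₃) (d23 : Disjoint U₂ U₃)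
    (M1 : Bad p g U₁) (M2 : Bad p g U₂) (M3 : Bad p g U₃) :
    Loss p g (U₁ ∪ U₂ ∪ U₃) 0 := by
  by_cases n1 : NC g U₁
  · exact three_bad h h1 h2 h3 d12 d13 d23 M1 M2 M3 n1
  by_cases n2 : NC g U₂
  · rw [Finset.union_comm U₁]
    exact three_bad h h2 h1 h3 d12.symm d23 d13 M2 M1 M3 n2
  exfalso
  obtain ⟨i, hi⟩ := M3.1.1
  exact const_two h h1 h2 d12 M1 M2 n1 n2 (h3 hi) (fun hh => Finset.disjoint_left.mp d13 hh hi)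
    (fun hh => Finset.disjoint_left.mp d23 hh hi)

theorem UF_card_V2 {g : ι → V2 p} {s : Finset ι} (h : UF g s) : #s ≤ 2 * p := by
  classical
  have hp := (Fact.out : p.Prime).two_le
  obtain ⟨V, hV, hmax⟩ := Finset.exists_max_image
    (s.powerset.filter (fun V => ∑ i ∈ V, g i = 0 ∧ Loss p g V 0)) Finset.card
    ⟨∅, by simp [Loss_empty]⟩
  simp only [Finset.mem_filter, Finset.mem_powerset] at hV hmax
  obtain ⟨hVs, hV0, hVL⟩ := hV
  have key : ∀ W ⊆ s, Disjoint V W → W.Nonempty → ∑ i ∈ W, g i = 0 → ¬ Loss p g W 0 := by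
    intro W hW hd hne hW0 hL
    have := hmax (V ∪ W) ⟨Finset.union_subset hVs hW, by rw [Finset.sum_union hd, hV0, hW0, add_zero],
      Loss_union h hVs hW hd hV0 hVL hL⟩
    rw [Finset.card_union_of_disjoint hd] at this
    have := Finset.card_pos.mpr hne
    omega
  have step : ∀ A ⊆ s, ∑ i ∈ A, g i = 0 → V ⊆ A → A = s ∨ ∃ U ⊆ s, Disjoint A U ∧ Bad p g U := by
    intro A hA hA0 hVA
    rcases (s \ A).eq_empty_or_nonempty with he | hne
    · left; exact Finset.Subset.antisymm hA (Finset.sdiff_eq_empty_iff_subset.mp he)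
    · right
      obtain ⟨U, hU, hM⟩ := exists_MZ g (s \ A) hne (sum_sdiff_zero g hA hA0 h.2.1)
      have hUs := hU.trans Finset.sdiff_subset
      have hd : Disjoint A U := Finset.disjoint_of_subset_right hU Finset.disjoint_sdiff
      exact ⟨U, hUs, hd, hM, key U hUs (Finset.disjoint_of_subset_left hVA hd) hM.1 hM.2.1⟩
  rcases step V hVs hV0 le_rfl with rfl | ⟨U₁, s1, d1, B1⟩
  · have := Loss_card hVL; omega
  have z1 : ∑ i ∈ V ∪ U₁, g i = 0 := by rw [Finset.sum_union d1, hV0, B1.1.2.1, add_zero]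
  have t1 := Finset.union_subset hVs s1
  have L1 := Loss_union h hVs s1 d1 hV0 hVL (Loss_one (p := p) B1.1)
  rcases step (V ∪ U₁) t1 z1 Finset.subset_union_left with e | ⟨U₂, s2, d2, B2⟩
  · rw [e] at L1
    have := Loss_card L1; omega
  have z2 : ∑ i ∈ V ∪ U₁ ∪ U₂, g i = 0 := by rw [Finset.sum_union d2, z1, B2.1.2.1, add_zero]
  have t2 := Finset.union_subset t1 s2
  have L2 := Loss_union h t1 s2 d2 z1 L1 (Loss_one (p := p) B2.1)
  rcases step (V ∪ U₁ ∪ U₂) t2 z2 (Finset.subset_union_left.trans Finset.subset_union_left)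
    with e | ⟨U₃, s3, d3, B3⟩
  · rw [e] at L2
    have := Loss_card L2; omega
  exfalso
  rw [Finset.disjoint_union_left] at d2
  rw [Finset.disjoint_union_left, Finset.disjoint_union_left] at d3
  refine key (U₁ ∪ U₂ ∪ U₃) (Finset.union_subset (Finset.union_subset s1 s2) s3) ?_ ?_ ?_
    (three_bad_all h s1 s2 s3 d2.2 d3.1.2 d3.2 B1 B2 B3)
  · rw [Finset.disjoint_union_right, Finset.disjoint_union_right]
    exact ⟨⟨d1, d2.1⟩, d3.1.1⟩
  · exact B3.1.1.mono Finset.subset_union_right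
  · rw [Finset.sum_union (by rw [Finset.disjoint_union_left]; exact ⟨d3.1.2, d3.2⟩),
      Finset.sum_union d2.2, B1.1.2.1, B2.1.2.1, B3.1.2.1]; simp

end HLemma


section Transport
variable {p : ℕ} [Fact p.Prime] {ι : Type} [DecidableEq ι]

lemma UF.congr {G H : Type} [AddCommGroup G] [AddCommGroup H] {g : ι → G} {f : ι → H}
    {s : Finset ι} (h : UF g s) (hfg : ∀ I ⊆ s, ∑ i ∈ I, f i = 0 ↔ ∑ i ∈ I, g i = 0) : UF f s := by
  refine ⟨?_, (hfg s le_rfl).mpr h.2.1, ?_⟩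
  · intro i hi h0
    have := (hfg {i} (by simpa using hi)).mp (by simpa using h0)
    exact h.1 i hi (by simpa using this)
  · intro I hI K hK h1 h2
    rw [hfg _ (Finset.inter_subset_left.trans hI)]
    exact h.2.2 I hI K hK ((hfg I hI).mp h1) ((hfg K hK).mp h2)

lemma UF_card_one {f : ι → ZMod p} {s : Finset ι} (h : UF f s) : #s ≤ p := by
  classical
  have hp := (Fact.out : p.Prime).two_le
  have key : UF (Sum.elim (fun i => ((f i, 0) : V2 p)) (fun _ : Fin p => ((0, 1) : V2 p)))
      (s.disjSum univ) := by
    have hs : ∀ I : Finset (ι ⊕ Fin p),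
        ∑ i ∈ I, Sum.elim (fun i => ((f i, 0) : V2 p)) (fun _ : Fin p => ((0, 1) : V2 p)) i = 0 ↔
        ∑ i ∈ I.toLeft, f i = 0 ∧ (I.toRight = ∅ ∨ I.toRight = univ) := by
      intro I
      rw [Finset.sum_sum_eq_sum_toLeft_add_sum_toRight]
      simp only [Sum.elim_inl, Sum.elim_inr, Prod.ext_iff, Prod.fst_add, Prod.snd_add, Prod.fst_sum,
        Prod.snd_sum, Finset.sum_const_zero, Prod.fst_zero, Prod.snd_zero, add_zero, zero_add,
        Finset.sum_const, Prod.smul_fst, Prod.smul_snd, smul_zero, nsmul_one]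
      rw [ZMod.natCast_eq_zero_iff]
      refine and_congr_right fun _ => ?_
      constructor
      · intro hd
        by_cases h0 : #I.toRight = 0
        · left; exact Finset.card_eq_zero.mp h0
        · right
          apply Finset.eq_univ_of_card
          have h1 := Nat.le_of_dvd (Nat.pos_of_ne_zero h0) hd
          have h2 := Finset.card_le_univ I.toRight
          rw [Fintype.card_fin] at h2 ⊢
          omega
      · rintro (h | h) <;> simp [h]
    refine ⟨?_, ?_, ?_⟩
    · rintro (i | i) hi
      · have : i ∈ s := by simpa using hi
        simpa using h.1 i this
      · simp
    · rw [hs]; simp [h.2.1]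
    · intro I hI K hK h1 h2
      rw [hs] at h1 h2 ⊢
      have hI' : I.toLeft ⊆ s := by
        intro x hx; have := hI (Finset.mem_toLeft.mp hx); simpa using this
      have hK' : K.toLeft ⊆ s := by
        intro x hx; have := hK (Finset.mem_toLeft.mp hx); simpa using this
      have e1 : (I ∩ K).toLeft = I.toLeft ∩ K.toLeft := by ext; simp
      have e2 : (I ∩ K).toRight = I.toRight ∩ K.toRight := by ext; simp
      rw [e1, e2]
      refine ⟨h.2.2 _ hI' _ hK' h1.1 h2.1, ?_⟩
      rcases h1.2 with h | h <;> rcases h2.2 with h' | h' <;> simp [h, h']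
  have := UF_card_V2 key
  rw [Finset.card_disjSum, Finset.card_univ, Fintype.card_fin] at this
  omega

variable {G : Type} [AddCommGroup G]

lemma UF_card_rank_one {g : ι → G} {s : Finset ι} (h : UF g s) {e : G} (he : addOrderOf e = p)
    (hg : ∀ i ∈ s, ∃ n : ℕ, g i = n • e) : #s ≤ p := by
  choose! n hn using hg
  refine UF_card_one (f := fun i => (n i : ZMod p)) (h.congr ?_)
  intro I hI
  rw [← Nat.cast_sum, ZMod.natCast_eq_zero_iff, ← he, addOrderOf_dvd_iff_nsmul_eq_zero,
    Finset.sum_congr rfl (fun i hi => hn i (hI hi)), ← Finset.sum_smul]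

lemma UF_card_rank_two {g : ι → G} {s : Finset ι} (h : UF g s) {e f : G}
    (hef : ∀ a b : ℕ, a • e + b • f = 0 ↔ p ∣ a ∧ p ∣ b)
    (hg : ∀ i ∈ s, ∃ a b : ℕ, g i = a • e + b • f) : #s ≤ 2 * p := by
  choose! a b hn using hg
  refine UF_card_V2 (g := fun i => ((a i : ZMod p), (b i : ZMod p))) (h.congr ?_)
  intro I hI
  rw [Finset.sum_congr rfl (fun i hi => hn i (hI hi)), Finset.sum_add_distrib,
    ← Finset.sum_smul, ← Finset.sum_smul, hef]
  rw [Prod.ext_iff, Prod.fst_sum, Prod.snd_sum]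
  simp only [Prod.fst_zero, Prod.snd_zero]
  rw [← Nat.cast_sum, ← Nat.cast_sum, ZMod.natCast_eq_zero_iff, ZMod.natCast_eq_zero_iff]

lemma xx_dvd (n : ℕ) (g : G) : xx p g ∣ xx p (n • g) := by
  obtain ⟨y, -, e⟩ := xx_nsmul_sub (p := p) n g
  rw [sub_eq_iff_eq_add] at e
  rw [e, Algebra.smul_def, mul_comm (algebraMap _ _ _), ← mul_add]
  exact dvd_mul_right _ _

lemma xx_pow_char (k : ℕ) (g : G) : xx p (p ^ k • g) = xx p g ^ (p ^ k) := by
  have : CharP (RA p G) p :=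
    charP_of_injective_algebraMap (algebraMap (ZMod p) (RA p G)).injective p
  rw [xx, xx, sub_pow_char_pow, one_pow, XX_nsmul]

lemma Kcyc {g : ι → G} {V : Finset ι} (hM : MZ g V) {e : G} {n : ℕ} (he : p ^ n • e = 0)
    (hg : ∀ i ∈ V, ∃ t : ℕ, g i = t • e) : ∑ i ∈ V, (1 : ℝ) / (addOrderOf (g i) : ℝ) ≤ 1 := by
  have hp : p.Prime := Fact.out
  choose! t ht using hg
  obtain ⟨j, -, hj⟩ := (Nat.dvd_prime_pow hp).mp (addOrderOf_dvd_of_nsmul_eq_zero he)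
  set N := p ^ j with hN
  have hNpos : 0 < N := pow_pos hp.pos _
  have hd : ∀ i, ∃ a, Nat.gcd N (t i) = p ^ a := fun i => by
    obtain ⟨a, -, h⟩ := (Nat.dvd_prime_pow hp).mp (Nat.gcd_dvd_left (p ^ j) (t i))
    exact ⟨a, h⟩
  choose a hd using hd
  have hdv : ∀ i, p ^ a i ∣ N := fun i => hd i ▸ Nat.gcd_dvd_left _ _
  have hord : ∀ i ∈ V, (1 : ℝ) / (addOrderOf (g i) : ℝ) = (p ^ a i : ℕ) / (N : ℝ) := by
    intro i hi
    have h1 : addOrderOf (g i) = N / p ^ a i := by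
      rw [ht i hi, IsOfFinAddOrder.addOrderOf_nsmul e (t i)
        (isOfFinAddOrder_iff_nsmul_eq_zero.mpr ⟨p ^ n, pow_pos hp.pos _, he⟩), hj, hd]
    rw [h1, Nat.cast_div (hdv i) (by exact_mod_cast (pow_pos hp.pos _).ne')]
    rw [one_div_div]
  rw [Finset.sum_congr rfl hord, ← Finset.sum_div, div_le_one (by exact_mod_cast hNpos)]
  rw [← Nat.cast_sum]
  obtain ⟨i0, hi0, hmin⟩ := Finset.exists_min_image V a hM.1
  have hfree := eps_mon_free (p := p) g (hM.free (Finset.erase_ssubset hi0))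
  have hlt : ∑ i ∈ V.erase i0, p ^ a i < N := by
    by_contra! hc
    have h1 : (∏ i ∈ V.erase i0, xx p e ^ (p ^ a i)) ∣ ∏ i ∈ V.erase i0, xx p (g i) := by
      apply Finset.prod_dvd_prod_of_dvd
      intro i hi
      have hiV := Finset.mem_of_mem_erase hi
      obtain ⟨c, hc⟩ : p ^ a i ∣ t i := hd i ▸ Nat.gcd_dvd_right _ _
      rw [ht i hiV, hc, mul_comm, mul_nsmul', ← xx_pow_char]
      exact xx_dvd _ _
    rw [Finset.prod_pow_eq_pow_sum, ← Nat.add_sub_cancel' hc, pow_add, hN, ← xx_pow_char,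
      ← hN, ← hj, addOrderOf_nsmul_eq_zero, xx_zero, zero_mul, zero_dvd_iff] at h1
    rw [h1, map_zero] at hfree
    exact zero_ne_one hfree
  have hdiv : p ^ a i0 ∣ ∑ i ∈ V.erase i0, p ^ a i :=
    Finset.dvd_sum (fun i hi => pow_dvd_pow p (hmin i (Finset.mem_of_mem_erase hi)))
  obtain ⟨x, hx⟩ := hdiv
  obtain ⟨y, hy⟩ := hdv i0
  rw [← Finset.sum_erase_add V _ hi0]
  have : ∑ i ∈ V.erase i0, p ^ a i + p ^ a i0 ≤ N := by
    rw [hx, hy] at hlt ⊢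
    have := lt_of_mul_lt_mul_left' hlt
    calc p ^ a i0 * x + p ^ a i0 = p ^ a i0 * (x + 1) := by ring
      _ ≤ _ := Nat.mul_le_mul_left _ this
  exact_mod_cast this

end Transport


section Upper
variable {p : ℕ} [Fact p.Prime] {ι : Type} [DecidableEq ι] {G : Type} [AddCommGroup G]

lemma UF.merge {g : ι → G} {s V : Finset ι} (h : UF g s) (hV : V ⊆ s) {v0 : ι} (hv : v0 ∈ V)
    (h0 : ∑ i ∈ V, g i ≠ 0) :
    UF (Function.update g v0 (∑ i ∈ V, g i)) (insert v0 (s \ V)) := by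
  set g' := Function.update g v0 (∑ i ∈ V, g i) with hg'
  have hdis : ∀ I ⊆ insert v0 (s \ V), ∀ i ∈ I, i ∈ V → i = v0 := by
    intro I hI i hi hiV
    have := hI hi
    simp only [Finset.mem_insert, Finset.mem_sdiff] at this
    tauto
  have hA : ∀ I ⊆ insert v0 (s \ V), v0 ∉ I → ∑ i ∈ I, g' i = ∑ i ∈ I, g i := by
    intro I _ hI
    apply Finset.sum_congr rfl
    intro i hi
    rw [hg', Function.update_of_ne]
    rintro rfl; exact hI hi
  have hB : ∀ I ⊆ insert v0 (s \ V), v0 ∈ I → ∑ i ∈ I, g' i = ∑ i ∈ I ∪ V, g i := by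
    intro I hI hvI
    have e : I ∪ V = (I.erase v0) ∪ V := by
      ext i; simp only [Finset.mem_union, Finset.mem_erase]
      by_cases hi : i = v0
      · subst hi; simp [hv]
      · simp [hi]
    have hd : Disjoint (I.erase v0) V := by
      rw [Finset.disjoint_left]
      intro i hi hiV
      exact (Finset.mem_erase.mp hi).1 (hdis I hI i (Finset.mem_of_mem_erase hi) hiV)
    rw [e, Finset.sum_union hd, ← Finset.sum_erase_add I _ hvI,
      hA (I.erase v0) ((Finset.erase_subset _ _).trans hI) (by simp)]
    congr 1
    simp [hg']
  have hsub : ∀ I ⊆ insert v0 (s \ V), I ⊆ s := by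
    intro I hI i hi
    have := hI hi
    simp only [Finset.mem_insert, Finset.mem_sdiff] at this
    rcases this with rfl | h
    · exact hV hv
    · exact h.1
  refine ⟨?_, ?_, ?_⟩
  · intro i hi
    by_cases hiv : i = v0
    · subst hiv; simpa [hg'] using h0
    · rw [hg', Function.update_of_ne hiv]
      exact h.1 i (hsub _ le_rfl hi)
  · rw [hB _ le_rfl (by simp), ← h.2.1]
    congr 1
    ext i
    simp only [Finset.mem_union, Finset.mem_insert, Finset.mem_sdiff]
    constructor
    · rintro ((rfl | h) | h)
      · exact hV hv
      · exact h.1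
      · exact hV h
    · tauto
  · intro I hI K hK h1 h2
    have hIK : I ∩ K ⊆ insert v0 (s \ V) := Finset.inter_subset_left.trans hI
    by_cases c1 : v0 ∈ I <;> by_cases c2 : v0 ∈ K
    · rw [hB _ hI c1] at h1
      rw [hB _ hK c2] at h2
      rw [hB _ hIK (by simp [c1, c2]), Finset.inter_union_distrib_right]
      exact h.2.2 _ (Finset.union_subset (hsub I hI) hV) _ (Finset.union_subset (hsub K hK) hV) h1 h2
    · rw [hB _ hI c1] at h1
      rw [hA _ hK c2] at h2
      rw [hA _ hIK (by simp [c2])]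
      have := h.2.2 _ (Finset.union_subset (hsub I hI) hV) _ (hsub K hK) h1 h2
      convert this using 2
      ext i
      simp only [Finset.mem_inter, Finset.mem_union]
      constructor
      · tauto
      · rintro ⟨h | h, h'⟩
        · exact ⟨h, h'⟩
        · exact absurd (hdis K hK i h' h ▸ h') c2
    · rw [hA _ hI c1] at h1
      rw [hB _ hK c2] at h2
      rw [hA _ hIK (by simp [c1])]
      have := h.2.2 _ (hsub I hI) _ (Finset.union_subset (hsub K hK) hV) h1 h2
      convert this using 2
      ext i
      simp only [Finset.mem_inter, Finset.mem_union]
      constructor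
      · tauto
      · rintro ⟨h', h | h⟩
        · exact ⟨h', h⟩
        · exact absurd (hdis I hI i h' h ▸ h') c1
    · rw [hA _ hI c1] at h1
      rw [hA _ hK c2] at h2
      rw [hA _ hIK (by simp [c1])]
      exact h.2.2 _ (hsub I hI) _ (hsub K hK) h1 h2

lemma ord_of_p {x : G} (h0 : x ≠ 0) (h : p • x = 0) : addOrderOf x = p :=
  addOrderOf_eq_prime h h0

lemma ord_div_p {x : G} {k : ℕ} (hk : p ^ k • x = 0) (h0 : x ≠ 0) :
    (1 : ℝ) / (addOrderOf x : ℝ) = (1 / (addOrderOf (p • x) : ℝ)) / p := by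
  have hp : p.Prime := Fact.out
  obtain ⟨j, -, hj⟩ := (Nat.dvd_prime_pow hp).mp (addOrderOf_dvd_of_nsmul_eq_zero hk)
  have hj0 : j ≠ 0 := by
    rintro rfl
    rw [pow_zero, AddMonoid.addOrderOf_eq_one_iff] at hj
    exact h0 hj
  have hd : p ∣ addOrderOf x := hj ▸ dvd_pow_self p hj0
  rw [addOrderOf_nsmul_of_dvd hp.ne_zero hd, Nat.cast_div hd (by exact_mod_cast hp.ne_zero)]
  have hp0 : (p : ℝ) ≠ 0 := by exact_mod_cast hp.ne_zero
  rw [one_div_div, div_right_comm, div_self hp0]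

open Classical in
lemma step_lemma (S : AddSubgroup G) (e : G) (n : ℕ) (he : p ^ n • e = 0)
    (hS : ∀ x ∈ S, ∃ t : ℕ, p • x = t • e) (r : ℕ) (C : ℝ)
    (h2 : ∀ (g : ι → G) (s : Finset ι), UF g s → (∀ i ∈ s, g i ∈ S) → (∀ i ∈ s, p • g i = 0) →
      #s ≤ r * p)
    (h3 : ∀ (g : ι → G) (s : Finset ι), UF g s → (∀ i ∈ s, ∃ t : ℕ, g i = t • e) →
      ∑ i ∈ s, (1 : ℝ) / (addOrderOf (g i) : ℝ) ≤ C) :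
    ∀ (c : ℕ) (g : ι → G) (s : Finset ι), UF g s → (∀ i ∈ s, g i ∈ S) →
      #(s.filter (fun i => p • g i ≠ 0)) ≤ c →
      ∑ i ∈ s, (1 : ℝ) / (addOrderOf (g i) : ℝ) ≤ r + C / p := by
  have hp : p.Prime := Fact.out
  have hp0 : (0 : ℝ) < p := by exact_mod_cast hp.pos
  intro c
  induction c using Nat.strong_induction_on with
  | _ c ih =>
  intro g s hu hgS hc
  set N := s.filter (fun i => p • g i ≠ 0) with hN
  have hNs : N ⊆ s := Finset.filter_subset _ _
  have hpk : ∀ x ∈ S, p ^ (n + 1) • x = 0 := by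
    intro x hx
    obtain ⟨t, ht⟩ := hS x hx
    rw [pow_succ, mul_nsmul', ht, ← mul_nsmul', mul_comm, mul_nsmul', he, nsmul_zero]
  have hsum : ∀ V : Finset ι, ∑ i ∈ V, p • g i = p • ∑ i ∈ V, g i := fun V => Finset.sum_nsmul _ _ _
  by_cases hA : ∃ V ⊆ N, ∑ i ∈ V, p • g i = 0 ∧ ∑ i ∈ V, g i ≠ 0
  · obtain ⟨V, hV, hmin⟩ := Finset.exists_min_image
      (N.powerset.filter (fun V => ∑ i ∈ V, p • g i = 0 ∧ ∑ i ∈ V, g i ≠ 0)) Finset.card (by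
        obtain ⟨V, hV, h⟩ := hA
        exact ⟨V, by simp only [Finset.mem_filter, Finset.mem_powerset]; exact ⟨hV, h⟩⟩)
    simp only [Finset.mem_filter, Finset.mem_powerset] at hV hmin
    obtain ⟨hVN, hV0, hV1⟩ := hV
    have hVne : V.Nonempty := by
      rw [Finset.nonempty_iff_ne_empty]; rintro rfl; simp at hV1
    have hM : MZ (fun i => p • g i) V := by
      refine ⟨hVne, hV0, ?_⟩
      intro K hK hKne hK0
      by_contra hne
      by_cases hK1 : ∑ i ∈ K, g i = 0
      · have hc1 := hmin (V \ K) ⟨Finset.sdiff_subset.trans hVN, sum_sdiff_zero _ hK hK0 hV0, by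
          have := Finset.sum_sdiff (f := g) hK
          rw [hK1, add_zero] at this
          rwa [this]⟩
        have := Finset.card_sdiff_of_subset hK
        have := Finset.card_le_card hK
        have := Finset.card_pos.mpr hKne
        omega
      · have hc1 := hmin K ⟨hK.trans hVN, hK0, hK1⟩
        exact hne (Finset.eq_of_subset_of_card_le hK hc1)
    obtain ⟨v0, hv0⟩ := hVne
    have hVs := hVN.trans hNs
    set h := ∑ i ∈ V, g i with hh
    have hu' := hu.merge hVs hv0 hV1
    have hph : p • h = 0 := by rw [hh, ← hsum, hV0]
    have hhS : h ∈ S := sum_mem (fun i hi => hgS i (hVs hi))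
    have hup : ∀ i ∈ s \ V, Function.update g v0 h i = g i := by
      intro i hi
      rw [Function.update_of_ne]
      rintro rfl
      exact (Finset.mem_sdiff.mp hi).2 hv0
    have hsub : (insert v0 (s \ V)).filter (fun i => p • Function.update g v0 h i ≠ 0) ⊆ N \ V := by
      intro i hi
      rw [Finset.mem_filter, Finset.mem_insert] at hi
      obtain ⟨rfl | hi, hi2⟩ := hi
      · rw [Function.update_self] at hi2; exact absurd hph hi2
      · rw [hup i hi] at hi2
        rw [Finset.mem_sdiff] at hi ⊢
        exact ⟨Finset.mem_filter.mpr ⟨hi.1, hi2⟩, hi.2⟩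
    have hcard : #((insert v0 (s \ V)).filter (fun i => p • Function.update g v0 h i ≠ 0)) < c := by
      refine lt_of_lt_of_le (Finset.card_lt_card ?_) hc
      refine ⟨hsub.trans Finset.sdiff_subset, fun hcon => ?_⟩
      have := hsub (hcon (hVN hv0))
      exact (Finset.mem_sdiff.mp this).2 hv0
    have hI := ih _ hcard _ _ hu' (by
      intro i hi
      rw [Finset.mem_insert] at hi
      rcases hi with rfl | hi
      · rw [Function.update_self]; exact hhS
      · rw [hup i hi]; exact hgS i (Finset.mem_sdiff.mp hi).1) le_rfl
    refine le_trans ?_ hI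
    have hv0' : v0 ∉ s \ V := fun hcon => (Finset.mem_sdiff.mp hcon).2 hv0
    have hcg : ∑ i ∈ s \ V, (1 : ℝ) / (addOrderOf (Function.update g v0 h i) : ℝ) =
        ∑ i ∈ s \ V, (1 : ℝ) / (addOrderOf (g i) : ℝ) :=
      Finset.sum_congr rfl (fun i hi => by rw [hup i hi])
    rw [Finset.sum_insert hv0', Function.update_self, ← hh, ord_of_p hV1 hph, hcg,
      ← Finset.sum_sdiff hVs, add_comm]
    gcongr
    have hk := Kcyc hM he (fun i hi => hS (g i) (hgS i (hVs hi)))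
    calc ∑ i ∈ V, (1 : ℝ) / (addOrderOf (g i) : ℝ)
        = (∑ i ∈ V, (1 : ℝ) / (addOrderOf (p • g i) : ℝ)) / p := by
          rw [Finset.sum_div]
          exact Finset.sum_congr rfl (fun i hi => ord_div_p (hpk _ (hgS i (hVs hi))) (hu.1 i (hVs hi)))
      _ ≤ 1 / p := by gcongr
  · push Not at hA
    have hNp : ∑ i ∈ N, p • g i = 0 := by
      have h1 := Finset.sum_sdiff (f := fun i => p • g i) hNs
      rw [hsum s, hu.2.1, nsmul_zero] at h1
      rw [← h1]
      symm
      rw [add_eq_right]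
      apply Finset.sum_eq_zero
      intro i hi
      rw [Finset.mem_sdiff] at hi
      by_contra hcon
      exact hi.2 (Finset.mem_filter.mpr ⟨hi.1, hcon⟩)
    have hN0 := hA N le_rfl hNp
    have huN : UF (fun i => p • g i) N := by
      refine ⟨fun i hi => (Finset.mem_filter.mp hi).2, hNp, ?_⟩
      intro I hI K hK h1 h2
      have := hu.2.2 I (hI.trans hNs) K (hK.trans hNs) (hA I hI h1) (hA K hK h2)
      rw [hsum, this, nsmul_zero]
    have b1 := h3 _ N huN (fun i hi => hS _ (hgS i (hNs hi)))
    have hpz : ∀ i ∈ s \ N, p • g i = 0 := by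
      intro i hi
      rw [Finset.mem_sdiff] at hi
      by_contra hcon
      exact hi.2 (Finset.mem_filter.mpr ⟨hi.1, hcon⟩)
    have b2 := h2 g (s \ N) (hu.restrict Finset.sdiff_subset (sum_sdiff_zero g hNs hN0 hu.2.1))
      (fun i hi => hgS i (Finset.sdiff_subset hi)) hpz
    rw [← Finset.sum_sdiff hNs]
    apply add_le_add
    · have : ∀ i ∈ s \ N, (1 : ℝ) / (addOrderOf (g i) : ℝ) = 1 / p := fun i hi => by
        rw [ord_of_p (hu.1 i (Finset.sdiff_subset hi)) (hpz i hi)]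
      rw [Finset.sum_congr rfl this, Finset.sum_const, nsmul_eq_mul, mul_one_div, div_le_iff₀ hp0]
      exact_mod_cast b2
    · calc ∑ i ∈ N, (1 : ℝ) / (addOrderOf (g i) : ℝ)
          = (∑ i ∈ N, (1 : ℝ) / (addOrderOf (p • g i) : ℝ)) / p := by
            rw [Finset.sum_div]
            exact Finset.sum_congr rfl (fun i hi => ord_div_p (hpk _ (hgS i (hNs hi))) (hu.1 i (hNs hi)))
        _ ≤ C / p := by gcongr

lemma geo_succ (n : ℕ) : ∑ k ∈ Finset.range (n + 1), (1 : ℝ) / (p : ℝ) ^ k =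
    1 + (∑ k ∈ Finset.range n, (1 : ℝ) / (p : ℝ) ^ k) / p := by
  rw [Finset.sum_range_succ', add_comm, Finset.sum_div]
  congr 1
  · simp
  · apply Finset.sum_congr rfl
    intro k _
    rw [pow_succ, div_div]

lemma upper_cyc (n : ℕ) : ∀ (e : G), p ^ n • e = 0 → ∀ (g : ι → G) (s : Finset ι), UF g s →
    (∀ i ∈ s, ∃ t : ℕ, g i = t • e) →
    ∑ i ∈ s, (1 : ℝ) / (addOrderOf (g i) : ℝ) ≤ ∑ k ∈ Finset.range n, (1 : ℝ) / (p : ℝ) ^ k := by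
  have hp : p.Prime := Fact.out
  have hp0 : (p : ℝ) ≠ 0 := by exact_mod_cast hp.ne_zero
  induction n with
  | zero =>
    intro e he g s hu hg
    have : s = ∅ := by
      rw [Finset.eq_empty_iff_forall_notMem]
      intro i hi
      obtain ⟨t, ht⟩ := hg i hi
      rw [pow_zero, one_nsmul] at he
      exact hu.1 i hi (by rw [ht, he, nsmul_zero])
    simp [this]
  | succ n ih =>
    intro e he g s hu hg
    by_cases h0 : p ^ n • e = 0
    · refine (ih e h0 g s hu hg).trans ?_
      rw [Finset.sum_range_succ]
      have : (0 : ℝ) ≤ 1 / (p : ℝ) ^ n := by positivity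
      linarith
    rw [geo_succ n]
    have hmem : ∀ x ∈ AddSubgroup.zmultiples e, ∃ t : ℕ, x = t • e := by
      intro x hx
      have hfin : IsOfFinAddOrder e :=
        isOfFinAddOrder_iff_nsmul_eq_zero.mpr ⟨p ^ (n + 1), pow_pos hp.pos _, he⟩
      rw [← hfin.mem_multiples_iff_mem_zmultiples] at hx
      obtain ⟨t, ht⟩ := hx
      exact ⟨t, ht.symm⟩
    have hord : addOrderOf (p ^ n • e) = p := by
      apply ord_of_p h0
      rw [← mul_nsmul', ← pow_succ', he]
    have hordE : addOrderOf e = p ^ (n + 1) := addOrderOf_eq_prime_pow h0 he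
    have := step_lemma (p := p) (ι := ι) (AddSubgroup.zmultiples e) (p • e) n
      (by rw [← mul_nsmul', ← pow_succ, he])
      (by
        intro x hx
        obtain ⟨t, rfl⟩ := hmem x hx
        exact ⟨t, by rw [← mul_nsmul', ← mul_nsmul', mul_comm]⟩) 1 _
      (by
        intro g s hu hg hpg
        rw [one_mul]
        refine UF_card_rank_one hu hord ?_
        intro i hi
        obtain ⟨t, ht⟩ := hmem _ (hg i hi)
        have h1 := hpg i hi
        rw [ht, ← mul_nsmul', ← addOrderOf_dvd_iff_nsmul_eq_zero, hordE, pow_succ'] at h1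
        obtain ⟨c, hc⟩ := Nat.dvd_of_mul_dvd_mul_left hp.pos h1
        exact ⟨c, by rw [ht, hc, ← mul_nsmul', mul_comm]⟩)
      (ih (p • e) (by rw [← mul_nsmul', ← pow_succ, he])) _ g s hu
      (by
        intro i hi
        obtain ⟨t, ht⟩ := hg i hi
        rw [ht]; exact AddSubgroup.nsmul_mem _ (AddSubgroup.mem_zmultiples e) t) le_rfl
    simpa using this

lemma upper_main (m : ℕ) (hm : 1 ≤ m) (g : ι → ZMod (p ^ m) × ZMod p) (s : Finset ι) (hu : UF g s) :
    ∑ i ∈ s, (1 : ℝ) / (addOrderOf (g i) : ℝ) ≤ 1 + ∑ k ∈ Finset.range m, (1 : ℝ) / (p : ℝ) ^ k := by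
  have hp : p.Prime := Fact.out
  have hp0 : (p : ℝ) ≠ 0 := by exact_mod_cast hp.ne_zero
  obtain ⟨n, rfl⟩ := Nat.exists_eq_add_of_le' hm
  rw [geo_succ n]
  have : NeZero (p ^ (n + 1)) := ⟨(pow_pos hp.pos _).ne'⟩
  have he : p ^ n • (((p : ℕ) : ZMod (p ^ (n + 1))), (0 : ZMod p)) = 0 := by
    ext
    · simp only [Prod.smul_fst, Prod.fst_zero]
      rw [nsmul_eq_mul]
      rw [← Nat.cast_mul, ← pow_succ]; simp
    · simp
  have := step_lemma (p := p) (ι := ι) ⊤ (((p : ℕ) : ZMod (p ^ (n + 1))), (0 : ZMod p)) n he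
    (by
      intro x _
      refine ⟨x.1.val, ?_⟩
      ext
      · simp [mul_comm]
      · simp) 2 _
    (by
      intro g s hu _ hpg
      refine UF_card_rank_two (p := p) hu (e := (((p ^ n : ℕ) : ZMod (p ^ (n + 1))), (0 : ZMod p)))
        (f := ((0 : ZMod (p ^ (n + 1))), (1 : ZMod p))) ?_ ?_
      · intro a b
        rw [Prod.ext_iff]
        simp only [Prod.fst_add, Prod.snd_add, Prod.smul_fst, Prod.smul_snd, smul_zero,
          add_zero, zero_add, Prod.fst_zero, Prod.snd_zero, nsmul_one]
        rw [nsmul_eq_mul, ← Nat.cast_mul, ZMod.natCast_eq_zero_iff, ZMod.natCast_eq_zero_iff, pow_succ',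
          Nat.mul_dvd_mul_iff_right (pow_pos hp.pos _)]
      · intro i hi
        have h1 := congrArg Prod.fst (hpg i hi)
        have e1 : ((g i).1.val : ZMod (p ^ (n + 1))) = (g i).1 := ZMod.natCast_zmod_val _
        have e2 : ((g i).2.val : ZMod p) = (g i).2 := ZMod.natCast_zmod_val _
        simp only [Prod.smul_fst, Prod.fst_zero] at h1
        rw [nsmul_eq_mul, ← e1, ← Nat.cast_mul, ZMod.natCast_eq_zero_iff] at h1
        obtain ⟨c, hc⟩ := Nat.dvd_of_mul_dvd_mul_left hp.pos ((pow_succ' p n).symm.dvd.trans h1)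
        refine ⟨c, (g i).2.val, ?_⟩
        ext
        · simp only [Prod.fst_add, Prod.smul_fst, smul_zero, add_zero]
          rw [nsmul_eq_mul, ← Nat.cast_mul, mul_comm c, ← hc, e1]
        · simp)
    (upper_cyc n _ he) _ g s hu (fun i _ => AddSubgroup.mem_top _) le_rfl
  refine this.trans (le_of_eq ?_)
  push_cast
  ring

end Upper


section Lower
variable {p : ℕ} [Fact p.Prime]

lemma UF.reindex {ι κ : Type} [DecidableEq ι] [DecidableEq κ] [Fintype ι] [Fintype κ] {G : Type}
    [AddCommGroup G] {f : ι → G} (h : UF f univ) (σ : κ ≃ ι) : UF (fun x => f (σ x)) univ := by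
  have hs : ∀ I : Finset κ, ∑ x ∈ I, f (σ x) = ∑ y ∈ I.map σ.toEmbedding, f y := by
    intro I; rw [Finset.sum_map]; rfl
  refine ⟨fun i _ => h.1 _ (mem_univ _), ?_, ?_⟩
  · rw [hs, Finset.map_univ_equiv]; exact h.2.1
  · intro I _ K _ h1 h2
    rw [hs] at h1 h2 ⊢
    rw [Finset.map_inter]
    exact h.2.2 _ (subset_univ _) _ (subset_univ _) h1 h2

lemma digits (m : ℕ) : ∀ t : Fin m → ℤ, (∀ k, (p : ℤ) ∣ t k → t k = 0) →
    ((p : ℤ) ^ m ∣ ∑ k : Fin m, (p : ℤ) ^ (k : ℕ) * t k) → ∀ k, t k = 0 := by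
  have hp : p.Prime := Fact.out
  have hp0 : (p : ℤ) ≠ 0 := by exact_mod_cast hp.ne_zero
  induction m with
  | zero => intro t _ _ k; exact k.elim0
  | succ m ih =>
    intro t ht h
    have e : ∑ k : Fin (m + 1), (p : ℤ) ^ (k : ℕ) * t k =
        t 0 + p * ∑ k : Fin m, (p : ℤ) ^ (k : ℕ) * t k.succ := by
      rw [Fin.sum_univ_succ, Finset.mul_sum]
      simp only [Fin.val_zero, pow_zero, one_mul, Fin.val_succ, pow_succ', mul_assoc]
    rw [e] at h
    have h0 : t 0 = 0 := by
      apply ht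
      have : (p : ℤ) ∣ t 0 + p * ∑ k : Fin m, (p : ℤ) ^ (k : ℕ) * t k.succ :=
        (dvd_pow_self _ (Nat.succ_ne_zero m)).trans h
      exact (dvd_add_left (dvd_mul_right _ _)).mp this
    rw [h0, zero_add, pow_succ', mul_dvd_mul_iff_left hp0] at h
    have := ih (fun k => t k.succ) (fun k => ht k.succ) h
    intro k
    refine Fin.cases h0 this k

/-- value of the unit at position `i` -/
def uu (p : ℕ) (i : Fin p) : ℤ := 1 - if i.val = 0 then (p : ℤ) else 0

lemma uu_not_dvd (i : Fin p) : ¬ (p : ℤ) ∣ uu p i := by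
  have hp : p.Prime := Fact.out
  intro h
  have h1 : (p : ℤ) ∣ 1 := by
    rw [uu] at h
    split_ifs at h
    · exact (dvd_sub_left (dvd_refl _)).mp h
    · simpa using h
  have := Int.le_of_dvd one_pos h1
  have := hp.two_le
  omega

lemma sum_uu (B : Finset (Fin p)) : ∑ i ∈ B, uu p i = #B - ∑ i ∈ B, if i.val = 0 then (p : ℤ) else 0 := by
  simp only [uu, Finset.sum_sub_distrib, Finset.sum_const, nsmul_eq_mul, mul_one]

lemma sum_uu_dvd (B : Finset (Fin p)) (h : (p : ℤ) ∣ ∑ i ∈ B, uu p i) : B = ∅ ∨ B = univ := by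
  rw [sum_uu] at h
  have h1 : (p : ℤ) ∣ ∑ i ∈ B, if i.val = 0 then (p : ℤ) else 0 := by
    apply Finset.dvd_sum
    intro i _
    split_ifs <;> simp
  have h2 : p ∣ #B := by
    have := (dvd_sub_left h1).mp h
    exact_mod_cast this
  by_cases h0 : #B = 0
  · left; exact Finset.card_eq_zero.mp h0
  · right
    apply Finset.eq_univ_of_card
    have h1 := Nat.le_of_dvd (Nat.pos_of_ne_zero h0) h2
    have h2 := Finset.card_le_univ B
    rw [Fintype.card_fin] at h2 ⊢
    omega

lemma sum_uu_zero (B : Finset (Fin p)) (h : B = ∅ ∨ B = univ) : ∑ i ∈ B, uu p i = 0 := by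
  have hp : p.Prime := Fact.out
  rcases h with rfl | rfl
  · simp
  · rw [sum_uu, Finset.card_univ, Fintype.card_fin, sub_eq_zero]
    rw [Finset.sum_eq_single ⟨0, hp.pos⟩]
    · simp
    · intro b _ hb
      rw [if_neg]
      intro hb0; exact hb (Fin.ext hb0)
    · simp

def LF (p m : ℕ) : (Fin m × Fin p) ⊕ Fin p → ZMod (p ^ m) × ZMod p :=
  Sum.elim (fun x => ((((p : ℤ) ^ (x.1 : ℕ) * uu p x.2 : ℤ) : ZMod (p ^ m)), 0)) (fun _ => (0, 1))

def lev {m : ℕ} (A : Finset (Fin m × Fin p)) (k : Fin m) : Finset (Fin p) :=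
  univ.filter (fun i => (k, i) ∈ A)

lemma sum_lev {m : ℕ} (A : Finset (Fin m × Fin p)) :
    ∑ x ∈ A, (p : ℤ) ^ (x.1 : ℕ) * uu p x.2 = ∑ k : Fin m, (p : ℤ) ^ (k : ℕ) * ∑ i ∈ lev A k, uu p i := by
  have : ∑ x ∈ A, (p : ℤ) ^ (x.1 : ℕ) * uu p x.2 =
      ∑ x : Fin m × Fin p, if x ∈ A then (p : ℤ) ^ (x.1 : ℕ) * uu p x.2 else 0 := by
    rw [← Finset.sum_filter]; simp
  rw [this, Fintype.sum_prod_type]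
  apply Finset.sum_congr rfl
  intro k _
  rw [lev, Finset.sum_filter, Finset.mul_sum]
  apply Finset.sum_congr rfl
  intro i _
  split_ifs <;> simp

lemma LF_sum {m : ℕ} (I : Finset ((Fin m × Fin p) ⊕ Fin p)) :
    ∑ x ∈ I, LF p m x = 0 ↔ (∀ k, lev I.toLeft k = ∅ ∨ lev I.toLeft k = univ) ∧
      (I.toRight = ∅ ∨ I.toRight = univ) := by
  rw [Finset.sum_sum_eq_sum_toLeft_add_sum_toRight]
  simp only [LF, Sum.elim_inl, Sum.elim_inr, Prod.ext_iff, Prod.fst_add, Prod.snd_add, Prod.fst_sum,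
    Prod.snd_sum, Finset.sum_const_zero, Prod.fst_zero, Prod.snd_zero, add_zero, zero_add,
    Finset.sum_const, Prod.smul_fst, Prod.smul_snd, smul_zero, nsmul_one]
  rw [ZMod.natCast_eq_zero_iff, ← Int.cast_sum, ZMod.intCast_zmod_eq_zero_iff_dvd, sum_lev]
  push_cast
  refine and_congr ?_ ?_
  · constructor
    · intro h k
      have := digits m (fun k => ∑ i ∈ lev I.toLeft k, uu p i)
        (fun k hk => sum_uu_zero _ (sum_uu_dvd _ hk)) h k
      exact sum_uu_dvd _ (by rw [this]; exact dvd_zero _)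
    · intro h
      rw [Finset.sum_eq_zero]
      · exact dvd_zero _
      · intro k _
        rw [sum_uu_zero _ (h k), mul_zero]
  · constructor
    · intro hd
      by_cases h0 : #I.toRight = 0
      · left; exact Finset.card_eq_zero.mp h0
      · right
        apply Finset.eq_univ_of_card
        have h1 := Nat.le_of_dvd (Nat.pos_of_ne_zero h0) hd
        have h2 := Finset.card_le_univ I.toRight
        rw [Fintype.card_fin] at h2 ⊢
        omega
    · rintro (h | h) <;> simp [h]

lemma LF_ord {m : ℕ} (k : Fin m) (i : Fin p) : addOrderOf (LF p m (Sum.inl (k, i))) = p ^ (m - k) := by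
  have hp : p.Prime := Fact.out
  have hk := k.2
  have hp0 : (p : ℤ) ≠ 0 := by exact_mod_cast hp.ne_zero
  have e : m - k = (m - k - 1) + 1 := by omega
  have hsm : ∀ n : ℕ, n • LF p m (Sum.inl (k, i)) = 0 ↔ (p : ℤ) ^ m ∣ n * (p ^ (k : ℕ) * uu p i) := by
    intro n
    simp only [LF, Sum.elim_inl, Prod.ext_iff, Prod.smul_fst, Prod.smul_snd, smul_zero, Prod.fst_zero,
      Prod.snd_zero, and_true]
    rw [nsmul_eq_mul, ← Int.cast_natCast n, ← Int.cast_mul, ZMod.intCast_zmod_eq_zero_iff_dvd]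
    push_cast
    rfl
  rw [e]
  apply addOrderOf_eq_prime_pow
  · rw [hsm]
    push_cast
    rw [← mul_assoc, ← pow_add]
    have e1 : m = (m - k - 1 + k) + 1 := by omega
    have e2 : (p : ℤ) ^ m = p ^ (m - (k : ℕ) - 1 + k) * p := by rw [← pow_succ, ← e1]
    rw [e2, mul_dvd_mul_iff_left (pow_ne_zero _ hp0)]
    exact uu_not_dvd i
  · rw [hsm]
    push_cast
    rw [← mul_assoc, ← pow_add]
    have e1 : m - (k : ℕ) - 1 + 1 + k = m := by omega
    rw [e1]
    exact dvd_mul_right _ _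

lemma LF_ord2 {m : ℕ} (i : Fin p) : addOrderOf (LF p m (Sum.inr i)) = p := by
  have hp : p.Prime := Fact.out
  apply ord_of_p
  · simp [LF]
  · simp only [LF, Sum.elim_inr]
    ext <;> simp

lemma LF_UF (m : ℕ) : UF (LF p m) univ := by
  have hp : p.Prime := Fact.out
  refine ⟨?_, ?_, ?_⟩
  · intro x _ h0
    have h1 : addOrderOf (LF p m x) = 1 := by rw [h0, addOrderOf_zero]
    rcases x with ⟨k, i⟩ | i
    · rw [LF_ord] at h1
      have := k.2
      exact (Nat.one_lt_pow (by omega) hp.one_lt).ne' h1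
    · rw [LF_ord2] at h1
      exact hp.one_lt.ne' h1
  · rw [LF_sum]
    refine ⟨fun k => Or.inr ?_, Or.inr ?_⟩
    · ext i; simp [lev]
    · ext i; simp
  · intro I _ K _ h1 h2
    rw [LF_sum] at h1 h2 ⊢
    have e2 : (I ∩ K).toRight = I.toRight ∩ K.toRight := by ext; simp
    have e1 : ∀ k, lev (I ∩ K).toLeft k = lev I.toLeft k ∩ lev K.toLeft k := by
      intro k; ext; simp [lev]
    constructor
    · intro k
      rw [e1]
      rcases h1.1 k with h | h <;> rcases h2.1 k with h' | h' <;> simp [h, h']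
    · rw [e2]
      rcases h1.2 with h | h <;> rcases h2.2 with h' | h' <;> simp [h, h']

lemma LF_cross (m : ℕ) : ∑ x, (1 : ℝ) / (addOrderOf (LF p m x) : ℝ) =
    1 + ∑ k ∈ Finset.range m, (1 : ℝ) / (p : ℝ) ^ k := by
  have hp : p.Prime := Fact.out
  have hp0 : (p : ℝ) ≠ 0 := by exact_mod_cast hp.ne_zero
  rw [Fintype.sum_sum_type, Fintype.sum_prod_type, add_comm]
  simp only [LF_ord, LF_ord2, Finset.sum_const, Finset.card_univ, Fintype.card_fin, nsmul_eq_mul]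
  congr 1
  · rw [mul_one_div, div_self hp0]
  · rw [Fin.sum_univ_eq_sum_range (fun k => (p : ℝ) * (1 / ((p ^ (m - k) : ℕ) : ℝ))) m,
      ← Finset.sum_range_reflect]
    apply Finset.sum_congr rfl
    intro k hk
    rw [Finset.mem_range] at hk
    have : m - (m - 1 - k) = k + 1 := by omega
    rw [this]
    push_cast
    rw [pow_succ]
    field_simp

end Lower

section Bridge

lemma min_iff_MZ {G : Type} [AddCommGroup G] {ℓ : ℕ} (g : Fin ℓ → G) (I : Finset (Fin ℓ)) :
    IsMinZeroSum g I ↔ MZ g I := by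
  constructor
  · rintro ⟨h1, h2, h3⟩
    refine ⟨h1, h2, ?_⟩
    intro K hK hne h0
    by_contra hne2
    exact h3 K (Finset.ssubset_iff_subset_ne.mpr ⟨hK, hne2⟩) hne h0
  · rintro ⟨h1, h2, h3⟩
    refine ⟨h1, h2, ?_⟩
    intro K hK hne h0
    exact (Finset.ssubset_iff_subset_ne.mp hK).2 (h3 K hK.1 hne h0)

lemma extend_partition {G ι : Type} [AddCommGroup G] [DecidableEq ι] (g : ι → G)
    (good : Finset ι → Prop) (A : Finset ι) : ∀ (B : Finset ι) (P0 : Finpartition B),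
    (∀ U ∈ P0.parts, MZ g U ∧ good U) → ∑ i ∈ A, g i = 0 → Disjoint B A →
    (∀ U ⊆ A, MZ g U → good U) →
    ∀ D, B ∪ A = D → ∃ P : Finpartition D, ∀ U ∈ P.parts, MZ g U ∧ good U := by
  induction A using Finset.strongInduction with
  | H A ih =>
    intro B P0 hP0 hA0 hd hgood D hD
    rcases A.eq_empty_or_nonempty with rfl | hne
    · rw [Finset.union_empty] at hD
      subst hD
      exact ⟨P0, hP0⟩
    · obtain ⟨U, hU, hM⟩ := exists_MZ g A hne hA0
      have hdU : Disjoint B U := Finset.disjoint_of_subset_right hU hd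
      refine ih (A \ U) (Finset.sdiff_ssubset hU hM.1) (B ∪ U)
        (P0.extend (b := U) (c := B ∪ U) (by simpa using hM.1.ne_empty) hdU rfl) ?_
        (sum_sdiff_zero g hU hM.2.1 hA0) ?_ (fun W hW => hgood W (hW.trans Finset.sdiff_subset)) D ?_
      · intro W hW
        rw [Finpartition.extend_parts, Finset.mem_insert] at hW
        rcases hW with rfl | hW
        · exact ⟨hM, hgood _ hU hM⟩
        · exact hP0 W hW
      · rw [Finset.disjoint_union_left]
        exact ⟨Finset.disjoint_of_subset_right Finset.sdiff_subset hd, Finset.disjoint_sdiff⟩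
      · rw [Finset.union_assoc, Finset.union_sdiff_of_subset hU, hD]

lemma sum_parts {G ι : Type} [AddCommGroup G] [DecidableEq ι] (g : ι → G) {D : Finset ι}
    (P : Finpartition D) (h : ∀ U ∈ P.parts, ∑ i ∈ U, g i = 0) : ∑ i ∈ D, g i = 0 := by
  rw [← P.biUnion_parts, Finset.sum_biUnion P.disjoint]
  exact Finset.sum_eq_zero h

lemma UFIM_imp {G : Type} [AddCommGroup G] {ℓ : ℕ} {g : Fin ℓ → G} (h : IsUFIM g) :
    UF g univ := by
  obtain ⟨h0, P, hP, huniq⟩ := h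
  have hsum : ∑ i, g i = 0 := sum_parts g P (fun U hU => (hP U hU).2.1)
  have key : ∀ I : Finset (Fin ℓ), ∑ i ∈ I, g i = 0 → ∀ U ∈ P.parts, U ⊆ I ∨ Disjoint U I := by
    intro I hI
    obtain ⟨P1, hP1⟩ := extend_partition g (fun U => U ⊆ I ∨ Disjoint U I) I ∅
      (Finpartition.empty (Finset (Fin ℓ))) (by simp) hI (by simp) (fun U hU _ => Or.inl hU) I (by simp)
    obtain ⟨P2, hP2⟩ := extend_partition g (fun U => U ⊆ I ∨ Disjoint U I) (univ \ I) I P1 hP1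
      (sum_sdiff_zero g (subset_univ I) hI hsum) Finset.disjoint_sdiff
      (fun U hU _ => Or.inr (Finset.disjoint_of_subset_left hU Finset.sdiff_disjoint)) univ
      (by simp)
    have : P2 = P := huniq P2 (fun U hU => (min_iff_MZ g U).mpr (hP2 U hU).1)
    subst this
    exact fun U hU => (hP2 U hU).2
  refine ⟨fun i _ => h0 i, hsum, ?_⟩
  intro I _ K _ hI hK
  have e : ∑ i ∈ I ∩ K, g i = ∑ i, if i ∈ I ∩ K then g i else 0 := by
    rw [← Finset.sum_filter]; congr 1; ext; simp
  rw [e]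
  apply sum_parts _ P
  intro U hU
  have hz : Disjoint U (I ∩ K) → ∑ i ∈ U, (if i ∈ I ∩ K then g i else 0) = 0 := by
    intro hd
    apply Finset.sum_eq_zero
    intro i hi
    rw [if_neg (Finset.disjoint_left.mp hd hi)]
  rcases key I hI U hU with h1 | h1
  · rcases key K hK U hU with h2 | h2
    · rw [← (hP U hU).2.1]
      apply Finset.sum_congr rfl
      intro i hi
      rw [if_pos (Finset.mem_inter.mpr ⟨h1 hi, h2 hi⟩)]
    · exact hz (Finset.disjoint_of_subset_right Finset.inter_subset_right h2)
  · exact hz (Finset.disjoint_of_subset_right Finset.inter_subset_left h1)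

lemma UFIM_of {G : Type} [AddCommGroup G] {ℓ : ℕ} {g : Fin ℓ → G} (h : UF g univ) : IsUFIM g := by
  refine ⟨fun i => h.1 i (mem_univ i), ?_⟩
  obtain ⟨P, hP⟩ := extend_partition g (fun _ => True) univ ∅
      (Finpartition.empty (Finset (Fin ℓ))) (by simp) h.2.1 (by simp) (fun _ _ _ => trivial) univ (by simp)
  have key : ∀ P Q : Finpartition (univ : Finset (Fin ℓ)), (∀ U ∈ P.parts, MZ g U) →
      (∀ U ∈ Q.parts, MZ g U) → P.parts ⊆ Q.parts := by
    intro P Q hP hQ U hU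
    obtain ⟨i, hi⟩ := (hP U hU).1
    obtain ⟨W, hW, hiW⟩ := Q.exists_mem (mem_univ i)
    have h0 := h.2.2 U (subset_univ _) W (subset_univ _) (hP U hU).2.1 (hQ W hW).2.1
    have hne : (U ∩ W).Nonempty := ⟨i, Finset.mem_inter.mpr ⟨hi, hiW⟩⟩
    have e1 := (hP U hU).2.2 (U ∩ W) Finset.inter_subset_left hne h0
    have e2 := (hQ W hW).2.2 (U ∩ W) Finset.inter_subset_right hne h0
    rw [← e1, e2]; exact hW
  refine ⟨P, fun U hU => (min_iff_MZ g U).mpr (hP U hU).1, ?_⟩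
  intro Q hQ
  have hQ' : ∀ U ∈ Q.parts, MZ g U := fun U hU => (min_iff_MZ g U).mp (hQ U hU)
  have hP' : ∀ U ∈ P.parts, MZ g U := fun U hU => (hP U hU).1
  exact Finpartition.ext (Finset.Subset.antisymm (key Q P hQ' hP') (key P Q hP' hQ'))

lemma K1_value (p : ℕ) (hp : p.Prime) (m : ℕ) (hm : 1 ≤ m) :
    K1 (ZMod (p ^ m) × ZMod p) = 1 + ∑ k ∈ Finset.range m, (1 : ℝ) / (p : ℝ) ^ k := by
  have : Fact p.Prime := ⟨hp⟩
  rw [K1]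
  apply IsGreatest.csSup_eq
  constructor
  · refine ⟨Fintype.card ((Fin m × Fin p) ⊕ Fin p),
      fun x => LF p m ((Fintype.equivFin ((Fin m × Fin p) ⊕ Fin p)).symm x),
      UFIM_of ((LF_UF m).reindex _), ?_⟩
    rw [crossNum, ← LF_cross]
    exact Equiv.sum_comp (Fintype.equivFin ((Fin m × Fin p) ⊕ Fin p)).symm
      (fun x => (1 : ℝ) / (addOrderOf (LF p m x) : ℝ))
  · rintro x ⟨ℓ, g, hg, rfl⟩
    exact upper_main m hm g univ (UFIM_imp hg)

lemma geo_closed (p : ℕ) (hp : p.Prime) (m : ℕ) (hm : 1 ≤ m) :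
    ∑ k ∈ Finset.range m, (1 : ℝ) / (p : ℝ) ^ k =
      ((p : ℝ) ^ m - 1) / ((p : ℝ) ^ m - (p : ℝ) ^ (m - 1)) := by
  obtain ⟨n, rfl⟩ := Nat.exists_eq_add_of_le' hm
  have h1 : (1 : ℝ) < p := by exact_mod_cast hp.one_lt
  have hp0 : (p : ℝ) ≠ 0 := by positivity
  have hp1 : (p : ℝ) - 1 ≠ 0 := by linarith
  have hden : ∀ n : ℕ, (p : ℝ) ^ (n + 1) - (p : ℝ) ^ n ≠ 0 := by
    intro n
    rw [pow_succ, ← mul_sub_one]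
    exact mul_ne_zero (pow_ne_zero _ hp0) hp1
  rw [Nat.add_sub_cancel]
  clear hm
  induction n with
  | zero => simp; field_simp
  | succ n ih =>
    rw [Finset.sum_range_succ, ih]
    have a1 := hden n
    have a2 := hden (n + 1)
    rw [div_add_div _ _ a1 (pow_ne_zero _ hp0), div_eq_div_iff (mul_ne_zero a1 (pow_ne_zero _ hp0)) a2]
    ring

end Bridge

/-- `K₁(C_{p^m} ⊕ C_p) = 1 + Σ_{k=1}^m 1/p^{k−1} = 1 + (p^m − 1)/(p^m − p^{m−1})`. -/
theorem K1_pm_p (p : ℕ) (hp : p.Prime) (m : ℕ) (hm : 1 ≤ m) :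
    K1 (ZMod (p ^ m) × ZMod p) = 1 + ∑ k ∈ Finset.range m, (1 : ℝ) / (p : ℝ) ^ k ∧
    K1 (ZMod (p ^ m) × ZMod p) =
      1 + ((p : ℝ) ^ m - 1) / ((p : ℝ) ^ m - (p : ℝ) ^ (m - 1)) := by
  have h := K1_value p hp m hm
  exact ⟨h, by rw [h, geo_closed p hp m hm]⟩
end

section
/- Let p and q be distinct primes and m ∈ ℕ. Then K_1(C_{p^m} ⊕ C_q) = Σ_{k=1}^m 1/p^{k−1} + 1 = (p^m − 1)/(p^m − p^{m−1}) + 1. -/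
open Finset

/-- Auxiliary: a family on a finite index set `s` with nonzero members, total sum zero, whose
zero-sum subfamilies are closed under intersection. -/
def Good {ι G : Type*} [DecidableEq ι] [AddCommGroup G] (s : Finset ι) (f : ι → G) : Prop :=
  (∀ i ∈ s, f i ≠ 0) ∧ ∑ i ∈ s, f i = 0 ∧
    ∀ I J : Finset ι, I ⊆ s → J ⊆ s → ∑ i ∈ I, f i = 0 → ∑ i ∈ J, f i = 0 →
      ∑ i ∈ I ∩ J, f i = 0

lemma sums_cover {ι G : Type*} [DecidableEq ι] [AddCommGroup G] [Fintype G] [DecidableEq G]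
    (r : ℕ) (hr : r.Prime) (hc : #{x : G | r • x = 0} ≤ r) (h : ι → G) (V : Finset ι)
    (h0 : ∀ i ∈ V, h i ≠ 0 ∧ r • h i = 0) (hV : r ≤ #V + 1) (y : G) (hy : r • y = 0) :
    ∃ I ⊆ V, ∑ i ∈ I, h i = y := by
  have key : ∀ V : Finset ι, (∀ i ∈ V, h i ≠ 0 ∧ r • h i = 0) →
      min r (#V + 1) ≤ #(V.powerset.image (fun I => ∑ i ∈ I, h i)) := by
    intro V
    induction V using Finset.induction_on with
    | empty => intro _; simp
    | insert a V ha ih =>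
      intro h0
      have ih' := ih (fun i hi => h0 i (mem_insert_of_mem hi))
      set A := V.powerset.image (fun I => ∑ i ∈ I, h i) with hA
      have hsub : A ⊆ (insert a V).powerset.image (fun I => ∑ i ∈ I, h i) :=
        image_subset_image (powerset_mono.2 (subset_insert a V))
      by_cases hcl : ∀ z ∈ A, z + h a ∈ A
      · have hmul : ∀ k : ℕ, k • h a ∈ A := by
          intro k
          induction k with
          | zero => simp only [zero_smul, hA, mem_image]; exact ⟨∅, by simp, by simp⟩
          | succ k ihk => rw [succ_nsmul]; exact hcl _ ihk
        obtain ⟨ha0, har⟩ := h0 a (mem_insert_self a V)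
        have := Fact.mk hr
        have hord : addOrderOf (h a) = r := addOrderOf_eq_prime har ha0
        have : r ≤ #A := by
          have hinj : Set.InjOn (fun k : ℕ => k • h a) (range r : Finset ℕ) := by
            have := nsmul_injOn_Iio_addOrderOf (x := h a)
            rw [hord] at this
            intro x hx y hy hxy
            exact this (by simpa using hx) (by simpa using hy) hxy
          calc r = #((range r).image (fun k : ℕ => k • h a)) := by
                rw [card_image_of_injOn hinj, card_range]
            _ ≤ #A := card_le_card (by
                intro z hz
                obtain ⟨k, _, rfl⟩ := mem_image.1 hz
                exact hmul k)
        exact (min_le_left _ _).trans (this.trans (card_le_card hsub))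
      · push Not at hcl
        obtain ⟨z, hz, hz'⟩ := hcl
        have hzz : z + h a ∈ (insert a V).powerset.image (fun I => ∑ i ∈ I, h i) := by
          obtain ⟨I, hI, rfl⟩ := mem_image.1 hz
          rw [mem_powerset] at hI
          refine mem_image.2 ⟨insert a I, ?_, ?_⟩
          · exact mem_powerset.2 (insert_subset_insert a hI)
          · rw [sum_insert (fun h' => ha (hI h')), add_comm]
        have : #A < #((insert a V).powerset.image (fun I => ∑ i ∈ I, h i)) :=
          card_lt_card ⟨hsub, fun h' => hz' (h' hzz)⟩
        rw [card_insert_of_notMem ha]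
        omega
  have h1 := key V h0
  rw [min_eq_left hV] at h1
  have hsub : V.powerset.image (fun I => ∑ i ∈ I, h i) ⊆ ({x : G | r • x = 0} : Finset G) := by
    intro z hz
    obtain ⟨I, hI, rfl⟩ := mem_image.1 hz
    rw [mem_powerset] at hI
    simp only [mem_filter, mem_univ, true_and, smul_sum]
    exact sum_eq_zero (fun i hi => (h0 i (hI hi)).2)
  have heq := eq_of_subset_of_card_le hsub (hc.trans h1)
  have : y ∈ V.powerset.image (fun I => ∑ i ∈ I, h i) := by rw [heq]; simpa using hy
  obtain ⟨I, hI, h2⟩ := mem_image.1 this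
  exact ⟨I, mem_powerset.1 hI, h2⟩

/-- If no small block is extractable, all `n`-zero subsets are zero. -/
lemma all_zero {ι G : Type*} [DecidableEq ι] [AddCommGroup G] [Fintype G] [DecidableEq G]
    (n r : ℕ) (hr : r.Prime) (hc : #{x : G | r • x = 0} ≤ r) (f : ι → G) (U : Finset ι)
    (h0 : ∀ i ∈ U, n • f i ≠ 0 ∧ r • (n • f i) = 0)
    (hno : ∀ I ⊆ U, #I ≤ r → n • ∑ i ∈ I, f i = 0 → ∑ i ∈ I, f i = 0) :
    ∀ I ⊆ U, n • ∑ i ∈ I, f i = 0 → ∑ i ∈ I, f i = 0 := by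
  intro I
  induction I using Finset.strongInduction with
  | H I ih =>
    intro hI hz
    by_cases hcard : #I ≤ r
    · exact hno I hI hcard hz
    push Not at hcard
    obtain ⟨W, hWI, hWr⟩ := exists_subset_card_eq hcard.le
    have hWne : W.Nonempty := card_pos.1 (hWr ▸ hr.pos)
    obtain ⟨u, hu⟩ := hWne
    obtain ⟨K, hK, hKs⟩ := sums_cover r hr hc (fun i => n • f i) (W.erase u)
      (fun i hi => h0 i (hI (hWI (mem_of_mem_erase hi))))
      (by rw [card_erase_of_mem hu]; omega) (-(n • f u))
      (by rw [smul_neg, (h0 u (hI (hWI hu))).2, neg_zero])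
    have huK : u ∉ K := fun h => notMem_erase u W (hK h)
    have hB : insert u K ⊆ W := insert_subset hu (hK.trans (erase_subset _ _))
    have hBz : ∑ i ∈ insert u K, f i = 0 := by
      apply hno _ ((hB.trans hWI).trans hI) (hWr ▸ card_le_card hB)
      rw [sum_insert huK, smul_add, smul_sum]
      have : ∑ i ∈ K, n • f i = -(n • f u) := hKs
      rw [this]; simp
    have hsd : ∑ i ∈ I \ insert u K, f i + ∑ i ∈ insert u K, f i = ∑ i ∈ I, f i :=
      sum_sdiff (hB.trans hWI)
    rw [hBz, add_zero] at hsd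
    rw [← hsd]
    apply ih
    · exact sdiff_ssubset (hB.trans hWI) ⟨u, mem_insert_self _ _⟩
    · exact sdiff_subset.trans hI
    · rw [hsd]; exact hz

lemma card_le {ι G : Type*} [DecidableEq ι] [AddCommGroup G] [Fintype G] [DecidableEq G]
    (n r : ℕ) (hr : r.Prime) (hc : #{x : G | r • x = 0} ≤ r) (s : Finset ι) (f : ι → G)
    (hg : Good s f) (U : Finset ι) (hU : U ⊆ s)
    (h0 : ∀ i ∈ U, n • f i ≠ 0 ∧ r • (n • f i) = 0)
    (hz : ∀ I ⊆ U, n • ∑ i ∈ I, f i = 0 → ∑ i ∈ I, f i = 0) : #U ≤ r := by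
  by_contra hlt
  push Not at hlt
  have hne : U.Nonempty := card_pos.1 (by omega)
  obtain ⟨u, hu⟩ := hne
  have ex : ∀ v ∈ U.erase u, ∃ I ⊆ U, u ∈ I ∧ v ∉ I ∧ ∑ i ∈ I, f i = 0 := by
    intro v hv
    obtain ⟨K, hK, hKs⟩ := sums_cover r hr hc (fun i => n • f i) ((U.erase u).erase v)
      (fun i hi => h0 i (mem_of_mem_erase (mem_of_mem_erase hi)))
      (by rw [card_erase_of_mem hv, card_erase_of_mem hu]; omega) (-(n • f u))
      (by rw [smul_neg, (h0 u hu).2, neg_zero])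
    have huK : u ∉ K := fun h => notMem_erase u U (mem_of_mem_erase (hK h))
    have hsub : insert u K ⊆ U :=
      insert_subset hu (hK.trans ((erase_subset _ _).trans (erase_subset _ _)))
    refine ⟨insert u K, hsub, mem_insert_self _ _, ?_, ?_⟩
    · rw [mem_insert, not_or]
      exact ⟨ne_of_mem_erase hv, fun h => notMem_erase v _ (hK h)⟩
    · apply hz _ hsub
      rw [sum_insert huK, smul_add, smul_sum]
      have : ∑ i ∈ K, n • f i = -(n • f u) := hKs
      rw [this]; simp
  have ind : ∀ W ⊆ U.erase u, W.Nonempty →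
      ∃ I ⊆ U, u ∈ I ∧ (∀ v ∈ W, v ∉ I) ∧ ∑ i ∈ I, f i = 0 := by
    intro W
    induction W using Finset.induction_on with
    | empty => intro _ h; simp at h
    | insert a W ha ih =>
      intro hW _
      obtain ⟨I, hI, huI, haI, hIz⟩ := ex a (hW (mem_insert_self _ _))
      rcases W.eq_empty_or_nonempty with rfl | hne
      · exact ⟨I, hI, huI, by simpa using haI, hIz⟩
      · obtain ⟨J, hJ, huJ, haJ, hJz⟩ := ih ((subset_insert _ _).trans hW) hne
        refine ⟨I ∩ J, inter_subset_left.trans hI, mem_inter.2 ⟨huI, huJ⟩, ?_,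
          hg.2.2 I J (hI.trans hU) (hJ.trans hU) hIz hJz⟩
        intro v hv hvI
        rw [mem_inter] at hvI
        rcases mem_insert.1 hv with rfl | hv
        · exact haI hvI.1
        · exact haJ v hv hvI.2
  have := hr.two_le
  obtain ⟨I, hI, huI, hnot, hIz⟩ := ind (U.erase u) (Subset.refl _)
    (card_pos.1 (by rw [card_erase_of_mem hu]; omega))
  have : I = {u} := by
    ext v
    rw [mem_singleton]
    constructor
    · intro hv
      by_contra hne
      exact hnot v (mem_erase.2 ⟨hne, hI hv⟩) hv
    · rintro rfl; exact huI
  rw [this, sum_singleton] at hIz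
  exact hg.1 u (hU hu) hIz

lemma Good.sdiff {ι G : Type*} [DecidableEq ι] [AddCommGroup G] {s U : Finset ι} {f : ι → G}
    (hg : Good s f) (hU : U ⊆ s) (hz : ∑ i ∈ U, f i = 0) : Good (s \ U) f := by
  refine ⟨fun i hi => hg.1 i (sdiff_subset hi), ?_, fun I J hI hJ =>
    hg.2.2 I J (hI.trans sdiff_subset) (hJ.trans sdiff_subset)⟩
  have := sum_sdiff (f := f) hU
  rw [hz, add_zero, hg.2.1] at this
  exact this

lemma Good.merge {ι G : Type*} [DecidableEq ι] [AddCommGroup G] {s B : Finset ι} {f : ι → G}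
    (hg : Good s f) (hB : B ⊆ s) {b : ι} (hb : b ∈ B) (hz : ∑ i ∈ B, f i ≠ 0) :
    Good (insert b (s \ B)) (Function.update f b (∑ i ∈ B, f i)) := by
  set f' := Function.update f b (∑ i ∈ B, f i) with hf'
  have hbn : b ∉ s \ B := fun h => (mem_sdiff.1 h).2 hb
  let ex : Finset ι → Finset ι := fun I => if b ∈ I then I.erase b ∪ B else I
  have hex : ∀ I ⊆ insert b (s \ B), ex I ⊆ s ∧ ∑ i ∈ ex I, f i = ∑ i ∈ I, f' i := by
    intro I hI
    by_cases hbI : b ∈ I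
    · have h1 : I.erase b ⊆ s \ B := by
        intro x hx
        rw [mem_erase] at hx
        exact (mem_insert.1 (hI hx.2)).resolve_left hx.1
      simp only [ex, if_pos hbI]
      refine ⟨union_subset (h1.trans sdiff_subset) hB, ?_⟩
      rw [sum_union (disjoint_of_subset_left h1 sdiff_disjoint), ← sum_erase_add _ _ hbI]
      congr 1
      · apply sum_congr rfl
        intro x hx
        rw [hf', Function.update_of_ne (ne_of_mem_erase hx)]
      · rw [hf', Function.update_self]
    · simp only [ex, if_neg hbI]
      have h1 : I ⊆ s \ B := by
        intro x hx
        rcases mem_insert.1 (hI hx) with rfl | h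
        · exact absurd hx hbI
        · exact h
      refine ⟨h1.trans sdiff_subset, ?_⟩
      apply sum_congr rfl
      intro x hx
      rw [hf', Function.update_of_ne (by rintro rfl; exact hbI hx)]
  have hexi : ∀ I J, I ⊆ insert b (s \ B) → J ⊆ insert b (s \ B) →
      ex (I ∩ J) = ex I ∩ ex J := by
    intro I J hI hJ
    ext x
    have hIx := @hI x
    have hJx := @hJ x
    simp only [mem_insert, mem_sdiff] at hIx hJx
    simp only [ex]
    by_cases hbI : b ∈ I <;> by_cases hbJ : b ∈ J <;>
      simp only [hbI, hbJ, mem_inter, and_true, and_false, if_true, if_false, mem_union,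
        mem_erase]
    · grind
    · grind
    · grind
  refine ⟨?_, ?_, ?_⟩
  · intro i hi
    rcases mem_insert.1 hi with rfl | h
    · rw [hf', Function.update_self]; exact hz
    · rw [hf', Function.update_of_ne (by rintro rfl; exact hbn h)]
      exact hg.1 i (sdiff_subset h)
  · rw [← (hex _ (Subset.refl _)).2, ← hg.2.1]
    congr 1
    simp only [ex, mem_insert_self, if_true, erase_insert hbn]
    exact sdiff_union_of_subset hB
  · intro I J hI hJ hIz hJz
    rw [← (hex _ (inter_subset_left.trans hI)).2, hexi I J hI hJ]
    exact hg.2.2 _ _ (hex I hI).1 (hex J hJ).1 ((hex I hI).2.trans hIz) ((hex J hJ).2.trans hJz)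

lemma reduce {ι G : Type*} [DecidableEq ι] [AddCommGroup G] [Fintype G] [DecidableEq G]
    (n r : ℕ) (hr : r.Prime) (hc : #{x : G | r • x = 0} ≤ r) (w : G → ℝ)
    (D : G → Prop) [DecidablePred D] (E : AddSubgroup G)
    (hD : ∀ x ∈ E, D x → n • x ≠ 0 ∧ r • (n • x) = 0)
    (hw : ∀ (B : Finset ι) (f : ι → G), (∀ i ∈ B, f i ∈ E ∧ D (f i)) → #B ≤ r →
      n • ∑ i ∈ B, f i = 0 → ∑ i ∈ B, f i ≠ 0 → ∑ i ∈ B, w (f i) ≤ w (∑ i ∈ B, f i)) :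
    ∀ (N : ℕ) (s : Finset ι) (f : ι → G), #s ≤ N → Good s f → (∀ i ∈ s, f i ∈ E) →
    ∃ (s' : Finset ι) (f' : ι → G), Good s' f' ∧ (∀ i ∈ s', f' i ∈ E) ∧
      ∑ i ∈ s, w (f i) ≤ ∑ i ∈ s', w (f' i) ∧ #{i ∈ s' | D (f' i)} ≤ r ∧
      (n • ∑ i ∈ s' with D (f' i), f' i = 0 → ∑ i ∈ s' with D (f' i), f' i = 0) := by
  intro N
  induction N with
  | zero =>
    intro s f hs hg hE
    have : s = ∅ := card_eq_zero.1 (by omega)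
    subst this
    exact ⟨∅, f, hg, hE, le_rfl, by simp, by simp⟩
  | succ N ih =>
    intro s f hs hg hE
    by_cases hno : ∀ I ⊆ s.filter (fun i => D (f i)), #I ≤ r → n • ∑ i ∈ I, f i = 0 →
        ∑ i ∈ I, f i = 0
    · have h0 : ∀ i ∈ s.filter (fun i => D (f i)), n • f i ≠ 0 ∧ r • (n • f i) = 0 := by
        intro i hi
        rw [mem_filter] at hi
        exact hD _ (hE i hi.1) hi.2
      have hall := all_zero n r hr hc f _ h0 hno
      exact ⟨s, f, hg, hE, le_rfl, card_le n r hr hc s f hg _ (filter_subset _ _) h0 hall,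
        hall _ (Subset.refl _)⟩
    · push Not at hno
      obtain ⟨B, hBU, hBr, hBn, hBz⟩ := hno
      have hBs : B ⊆ s := hBU.trans (filter_subset _ _)
      have hBD : ∀ i ∈ B, f i ∈ E ∧ D (f i) := fun i hi =>
        ⟨hE i (hBs hi), (mem_filter.1 (hBU hi)).2⟩
      have hBne : B.Nonempty := by
        rw [nonempty_iff_ne_empty]; rintro rfl; simp at hBz
      obtain ⟨b, hb⟩ := hBne
      have hcard : 2 ≤ #B := by
        by_contra hlt
        have h1 : #B = 1 := by
          have := card_pos.2 ⟨b, hb⟩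
          omega
        obtain ⟨c, rfl⟩ := card_eq_one.1 h1
        rw [sum_singleton] at hBn
        have := hBD c (mem_singleton_self c)
        exact (hD _ this.1 this.2).1 hBn
      have hbn : b ∉ s \ B := fun h => (mem_sdiff.1 h).2 hb
      have hg' := hg.merge hBs hb hBz
      have hupd : ∀ i ∈ s \ B, Function.update f b (∑ i ∈ B, f i) i = f i := by
        intro i hi
        rw [Function.update_of_ne (by rintro rfl; exact hbn hi)]
      obtain ⟨s', f', h1, h2, h3, h4⟩ := ih (insert b (s \ B)) _ (by
        rw [card_insert_of_notMem hbn, card_sdiff_of_subset hBs]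
        have := card_le_card hBs
        omega) hg' (by
        intro i hi
        rcases mem_insert.1 hi with rfl | h
        · rw [Function.update_self]
          exact sum_mem (fun i hi => (hBD i hi).1)
        · rw [hupd i h]; exact hE i (sdiff_subset h))
      refine ⟨s', f', h1, h2, le_trans ?_ h3, h4⟩
      rw [sum_insert hbn, Function.update_self, ← sum_sdiff hBs, add_comm]
      apply add_le_add
      · exact hw B f hBD hBr hBn hBz
      · exact le_of_eq (sum_congr rfl (fun i hi => by rw [hupd i hi]))

lemma good_iff_UFIM {G : Type*} [AddCommGroup G] {ℓ : ℕ} (g : Fin ℓ → G) :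
    IsUFIM g ↔ Good univ g := by
  have exF : ∀ I : Finset (Fin ℓ), ∑ i ∈ I, g i = 0 →
      ∃ P : Finpartition I, ∀ J ∈ P.parts, IsMinZeroSum g J := by
    intro I
    induction I using Finset.strongInduction with
    | H I ih =>
      intro hI
      rcases I.eq_empty_or_nonempty with rfl | hne
      · exact ⟨Finpartition.empty _, by simp⟩
      · classical
        obtain ⟨J, hJ, hmin⟩ := exists_min_image
          (I.powerset.filter (fun J => J.Nonempty ∧ ∑ i ∈ J, g i = 0)) card
          ⟨I, by simp [hne, hI]⟩
        simp only [mem_filter, mem_powerset] at hJ hmin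
        obtain ⟨hJI, hJne, hJz⟩ := hJ
        have hJm : IsMinZeroSum g J := by
          refine ⟨hJne, hJz, fun K hK hKne hKz => ?_⟩
          have := hmin K ⟨hK.subset.trans hJI, hKne, hKz⟩
          exact absurd (card_lt_card hK) (by omega)
        have hsd := sum_sdiff (f := g) hJI
        rw [hJz, add_zero, hI] at hsd
        obtain ⟨P, hP⟩ := ih (I \ J) (sdiff_ssubset hJI hJne) hsd
        refine ⟨P.extend (b := J) (c := I) hJne.ne_empty sdiff_disjoint
          (sdiff_union_of_subset hJI), ?_⟩
        intro K hK
        simp only [Finpartition.extend, mem_insert] at hK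
        rcases hK with rfl | hK
        · exact hJm
        · exact hP K hK
  constructor
  · rintro ⟨h0, P, hP, huniq⟩
    have hmem : ∀ J, IsMinZeroSum g J → ∑ i, g i = 0 → J ∈ P.parts := by
      intro J hJ htot
      have hsd := sum_sdiff (f := g) (subset_univ J)
      rw [hJ.2.1, add_zero, htot] at hsd
      obtain ⟨Q, hQ⟩ := exF _ hsd
      have := huniq (Q.extend (b := J) (c := univ) hJ.1.ne_empty sdiff_disjoint
          (sdiff_union_of_subset (subset_univ J))) (by
        intro K hK
        simp only [Finpartition.extend, mem_insert] at hK
        rcases hK with rfl | hK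
        · exact hJ
        · exact hQ K hK)
      rw [← this]
      simp [Finpartition.extend]
    have htot : ∑ i, g i = 0 := by
      have h1 : ∑ i ∈ P.parts.biUnion id, g i = 0 := by
        rw [sum_biUnion P.disjoint]
        exact sum_eq_zero (fun I hI => (hP I hI).2.1)
      rwa [P.biUnion_parts] at h1
    have hsat : ∀ I : Finset (Fin ℓ), ∑ i ∈ I, g i = 0 → ∀ i ∈ I, P.part i ⊆ I := by
      intro I hI i hi
      obtain ⟨Q, hQ⟩ := exF I hI
      obtain ⟨K, hK, hiK⟩ := Q.exists_mem hi
      have := P.part_eq_of_mem (hmem K (hQ K hK) htot) hiK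
      rw [this]
      exact Q.le hK
    refine ⟨fun i _ => h0 i, htot, ?_⟩
    intro I J _ _ hI hJ
    have : I ∩ J = (P.parts.filter (fun K => K ⊆ I ∩ J)).biUnion id := by
      ext x
      simp only [mem_biUnion, mem_filter, id]
      constructor
      · intro hx
        rw [mem_inter] at hx
        exact ⟨P.part x, ⟨P.part_mem.2 (mem_univ x),
          subset_inter (hsat I hI x hx.1) (hsat J hJ x hx.2)⟩, P.mem_part (mem_univ x)⟩
      · rintro ⟨K, ⟨_, hK⟩, hx⟩
        exact hK hx
    rw [this, sum_biUnion (P.disjoint.subset (by intro K hK; simp at hK; exact hK.1))]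
    exact sum_eq_zero (fun K hK => (hP K (mem_filter.1 hK).1).2.1)
  · rintro ⟨h0, htot, hint⟩
    refine ⟨fun i => h0 i (mem_univ i), ?_⟩
    obtain ⟨P, hP⟩ := exF univ htot
    have hsub : ∀ P Q : Finpartition (univ : Finset (Fin ℓ)), IsFactorization g P →
        IsFactorization g Q → P.parts ⊆ Q.parts := by
      intro P Q hP hQ I hI
      obtain ⟨i, hi⟩ := (hP I hI).1
      obtain ⟨J, hJ, hiJ⟩ := Q.exists_mem (mem_univ i)
      have hz := hint I J (subset_univ _) (subset_univ _) (hP I hI).2.1 (hQ J hJ).2.1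
      have hne : (I ∩ J).Nonempty := ⟨i, mem_inter.2 ⟨hi, hiJ⟩⟩
      have e1 : I ∩ J = I := by
        by_contra hn
        exact (hP I hI).2.2 _ (inter_subset_left.ssubset_of_ne hn) hne hz
      have e2 : I ∩ J = J := by
        by_contra hn
        exact (hQ J hJ).2.2 _ (inter_subset_right.ssubset_of_ne hn) hne hz
      rw [← e1, e2]
      exact hJ
    exact ⟨P, hP, fun Q hQ => Finpartition.ext ((hsub Q P hQ hP).antisymm (hsub P Q hP hQ))⟩

lemma boundP {ι G : Type*} [DecidableEq ι] [AddCommGroup G] [Fintype G] [DecidableEq G]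
    (p : ℕ) (hp : p.Prime) (hc : #{x : G | p • x = 0} ≤ p) (k : ℕ) :
    ∀ (s : Finset ι) (f : ι → G), Good s f → (∀ i ∈ s, p ^ k • f i = 0) →
      ∑ i ∈ s, (1 : ℝ) / (addOrderOf (f i) : ℝ) ≤ ∑ j ∈ range k, (1 : ℝ) / (p : ℝ) ^ j := by
  have hp0 : (0 : ℝ) < p := by exact_mod_cast hp.pos
  induction k with
  | zero =>
    intro s f hg hk
    have : s = ∅ := by
      rw [eq_empty_iff_forall_notMem]
      intro i hi
      exact hg.1 i hi (by simpa using hk i hi)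
    subst this
    simp
  | succ k ih =>
    intro s f hg hk
    have hord : ∀ x : G, p ^ (k + 1) • x = 0 → p ^ k • x ≠ 0 → addOrderOf x = p ^ (k + 1) := by
      intro x h1 h2
      have := Fact.mk hp
      exact addOrderOf_eq_prime_pow h2 h1
    let E : AddSubgroup G := (nsmulAddMonoidHom (α := G) (p ^ (k + 1))).ker
    have hE : ∀ x, x ∈ E ↔ p ^ (k + 1) • x = 0 := by
      intro x; simp [E, AddMonoidHom.mem_ker]
    obtain ⟨s', f', hg', hE', hle, hcard, hz⟩ := reduce (ι := ι) (G := G) (p ^ k) p hp hc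
      (fun x => (1 : ℝ) / (addOrderOf x : ℝ)) (fun x => p ^ k • x ≠ 0) E
      (by
        intro x hx hD
        refine ⟨hD, ?_⟩
        rw [smul_smul, ← pow_succ']
        exact (hE x).1 hx)
      (by
        intro B f hB hBr hBn hBz
        have h1 : ∀ i ∈ B, (1 : ℝ) / (addOrderOf (f i) : ℝ) = 1 / (p : ℝ) ^ (k + 1) := by
          intro i hi
          rw [hord (f i) ((hE _).1 (hB i hi).1) (hB i hi).2]
          push_cast
          rfl
        rw [sum_congr rfl h1, sum_const, nsmul_eq_mul]
        have h2 : (addOrderOf (∑ i ∈ B, f i) : ℝ) ≤ (p : ℝ) ^ k := by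
          exact_mod_cast Nat.le_of_dvd (pow_pos hp.pos k) (addOrderOf_dvd_of_nsmul_eq_zero hBn)
        have h3 : (0 : ℝ) < addOrderOf (∑ i ∈ B, f i) := by
          exact_mod_cast addOrderOf_pos _
        calc (#B : ℝ) * (1 / (p : ℝ) ^ (k + 1)) ≤ p * (1 / (p : ℝ) ^ (k + 1)) := by
              gcongr
          _ = 1 / (p : ℝ) ^ k := by rw [pow_succ]; field_simp
          _ ≤ _ := one_div_le_one_div_of_le h3 h2)
      (#s) s f le_rfl hg (fun i hi => (hE _).2 (hk i hi))
    set U := s'.filter (fun i => p ^ k • f' i ≠ 0) with hU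
    have hUs : U ⊆ s' := filter_subset _ _
    have hUz : ∑ i ∈ U, f' i = 0 := by
      apply hz
      rw [smul_sum, sum_filter_ne_zero, ← smul_sum, hg'.2.1, smul_zero]
    have h1 := ih (s' \ U) f' (hg'.sdiff hUs hUz) (by
      intro i hi
      simp only [hU, mem_sdiff, mem_filter, not_and, not_not] at hi
      exact hi.2 hi.1)
    have h2 : ∑ i ∈ U, (1 : ℝ) / (addOrderOf (f' i) : ℝ) ≤ 1 / (p : ℝ) ^ k := by
      have h1 : ∀ i ∈ U, (1 : ℝ) / (addOrderOf (f' i) : ℝ) = 1 / (p : ℝ) ^ (k + 1) := by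
        intro i hi
        rw [hU, mem_filter] at hi
        rw [hord (f' i) ((hE _).1 (hE' i hi.1)) hi.2]
        push_cast
        rfl
      rw [sum_congr rfl h1, sum_const, nsmul_eq_mul]
      calc (#U : ℝ) * (1 / (p : ℝ) ^ (k + 1)) ≤ p * (1 / (p : ℝ) ^ (k + 1)) := by
            gcongr
        _ = 1 / (p : ℝ) ^ k := by rw [pow_succ]; field_simp
    rw [sum_range_succ]
    have h3 := sum_sdiff (f := fun i => (1 : ℝ) / (addOrderOf (f' i) : ℝ)) hUs
    linarith

/-- truncated weight -/
noncomputable def tw {G : Type*} [AddCommGroup G] [DecidableEq G] (p q m j : ℕ) (x : G) : ℝ :=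
  if p ^ m • x = 0 then (1 : ℝ) / (addOrderOf x : ℝ)
  else min ((1 : ℝ) / (addOrderOf x : ℝ)) (1 / ((p : ℝ) ^ j * q))

lemma boundQ {ι G : Type*} [DecidableEq ι] [AddCommGroup G] [Fintype G] [DecidableEq G]
    (p q : ℕ) (hp : p.Prime) (hq : q.Prime) (hpq : p ≠ q) (m : ℕ)
    (hcp : #{x : G | p • x = 0} ≤ p) (hcq : #{x : G | q • x = 0} ≤ q)
    (hN : ∀ x : G, (p ^ m * q) • x = 0) (d : ℕ) :
    ∀ j, j + d = m → ∀ (s : Finset ι) (f : ι → G), Good s f →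
      ∑ i ∈ s, tw p q m j (f i) ≤
        ∑ j ∈ range m, (1 : ℝ) / (p : ℝ) ^ j + 1 / (p : ℝ) ^ j := by
  have hp0 : (0 : ℝ) < p := by exact_mod_cast hp.pos
  have hq0 : (0 : ℝ) < q := by exact_mod_cast hq.pos
  have hop : ∀ x : G, (0 : ℝ) < addOrderOf x := fun x => by exact_mod_cast addOrderOf_pos x
  have hcop : Nat.Coprime p q := (Nat.coprime_primes hp hq).2 hpq
  have red : ∀ j, ∀ (s : Finset ι) (f : ι → G), Good s f →
    ∃ (s' : Finset ι) (f' : ι → G), Good s' f' ∧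
      ∑ i ∈ s, tw p q m j (f i) ≤ ∑ i ∈ s', tw p q m j (f' i) ∧
      #{i ∈ s' | p ^ m • f' i ≠ 0 ∧ (p ^ j * q) • f' i = 0} ≤ q ∧
      (p ^ m • ∑ i ∈ s' with p ^ m • f' i ≠ 0 ∧ (p ^ j * q) • f' i = 0, f' i = 0 →
        ∑ i ∈ s' with p ^ m • f' i ≠ 0 ∧ (p ^ j * q) • f' i = 0, f' i = 0) := by
    intro j s f hg
    obtain ⟨s', f', hg', _, h⟩ := reduce (ι := ι) (G := G) (p ^ m) q hq hcq
      (tw p q m j) (fun x => p ^ m • x ≠ 0 ∧ (p ^ j * q) • x = 0) ⊤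
      (by
        rintro x - hx
        refine ⟨hx.1, ?_⟩
        rw [smul_smul, mul_comm]
        exact hN x)
      (by
        intro B f hB hBr hBn hBz
        have h1 : ∀ i ∈ B, tw p q m j (f i) ≤ 1 / ((p : ℝ) ^ j * q) := by
          intro i hi
          rw [tw, if_neg (hB i hi).2.1]
          exact min_le_right _ _
        have hdvd : addOrderOf (∑ i ∈ B, f i) ∣ p ^ j := by
          have h2 : addOrderOf (∑ i ∈ B, f i) ∣ p ^ m := addOrderOf_dvd_of_nsmul_eq_zero hBn
          have h3 : addOrderOf (∑ i ∈ B, f i) ∣ p ^ j * q := by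
            apply addOrderOf_dvd_of_nsmul_eq_zero
            rw [smul_sum]
            exact sum_eq_zero (fun i hi => (hB i hi).2.2)
          exact (Nat.Coprime.coprime_dvd_left h2 (hcop.pow_left m)).dvd_of_dvd_mul_right h3
        have h2 : (addOrderOf (∑ i ∈ B, f i) : ℝ) ≤ (p : ℝ) ^ j := by
          exact_mod_cast Nat.le_of_dvd (pow_pos hp.pos j) hdvd
        calc ∑ i ∈ B, tw p q m j (f i) ≤ ∑ i ∈ B, 1 / ((p : ℝ) ^ j * q) := sum_le_sum h1
          _ = (#B : ℝ) * (1 / ((p : ℝ) ^ j * q)) := by rw [sum_const, nsmul_eq_mul]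
          _ ≤ q * (1 / ((p : ℝ) ^ j * q)) := by gcongr
          _ = 1 / (p : ℝ) ^ j := by field_simp
          _ ≤ tw p q m j (∑ i ∈ B, f i) := by
            rw [tw, if_pos hBn]
            exact one_div_le_one_div_of_le (hop _) h2)
      (#s) s f le_rfl hg (fun i hi => AddSubgroup.mem_top _)
    exact ⟨s', f', hg', h⟩
  induction d with
  | zero =>
    intro j hj s f hg
    obtain rfl : j = m := by omega
    obtain ⟨s', f', hg', hle, hcard, hz⟩ := red j s f hg
    set U := s'.filter (fun i => p ^ j • f' i ≠ 0 ∧ (p ^ j * q) • f' i = 0) with hU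
    have hUs : U ⊆ s' := filter_subset _ _
    have hU' : U = s'.filter (fun i => p ^ j • f' i ≠ 0) := by
      rw [hU]; apply filter_congr; intro i _; simp [hN]
    have hUz : ∑ i ∈ U, f' i = 0 := by
      apply hz
      rw [hU', smul_sum, sum_filter_ne_zero, ← smul_sum, hg'.2.1, smul_zero]
    have hk : ∀ i ∈ s' \ U, p ^ j • f' i = 0 := by
      intro i hi
      simp only [hU', mem_sdiff, mem_filter, not_and, not_not] at hi
      exact hi.2 hi.1
    have h1 := boundP p hp hcp j (s' \ U) f' (hg'.sdiff hUs hUz) hk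
    have h2 : ∑ i ∈ U, tw p q j j (f' i) ≤ 1 / (p : ℝ) ^ j := by
      calc ∑ i ∈ U, tw p q j j (f' i) ≤ ∑ i ∈ U, 1 / ((p : ℝ) ^ j * q) := by
            apply sum_le_sum
            intro i hi
            rw [hU', mem_filter] at hi
            rw [tw, if_neg hi.2]
            exact min_le_right _ _
        _ = (#U : ℝ) * (1 / ((p : ℝ) ^ j * q)) := by rw [sum_const, nsmul_eq_mul]
        _ ≤ q * (1 / ((p : ℝ) ^ j * q)) := by gcongr
        _ = 1 / (p : ℝ) ^ j := by field_simp
    have h3 := sum_sdiff (f := fun i => tw p q j j (f' i)) hUs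
    have h4 : ∑ i ∈ s' \ U, tw p q j j (f' i) =
        ∑ i ∈ s' \ U, (1 : ℝ) / (addOrderOf (f' i) : ℝ) :=
      sum_congr rfl (fun i hi => by rw [tw, if_pos (hk i hi)])
    linarith
  | succ d ih =>
    intro j hj s f hg
    obtain ⟨s', f', hg', hle, hcard, -⟩ := red j s f hg
    have h1 := ih (j + 1) (by omega) s' f' hg'
    set c : ℝ := 1 / ((p : ℝ) ^ j * q) - 1 / ((p : ℝ) ^ (j + 1) * q) with hc
    have hc0 : 0 ≤ c := by
      rw [hc, sub_nonneg]
      apply one_div_le_one_div_of_le (by positivity)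
      have : (1 : ℝ) ≤ p := by exact_mod_cast hp.one_le
      have h' : (p : ℝ) ^ j ≤ (p : ℝ) ^ (j + 1) := pow_le_pow_right₀ this (Nat.le_succ j)
      gcongr
    have hpt : ∀ x : G, tw p q m j x ≤ tw p q m (j + 1) x +
        if p ^ m • x ≠ 0 ∧ (p ^ j * q) • x = 0 then c else 0 := by
      intro x
      by_cases hx : p ^ m • x = 0
      · simp [tw, hx]
      · rw [tw, tw, if_neg hx, if_neg hx]
        by_cases hxj : (p ^ j * q) • x = 0
        · rw [if_pos ⟨hx, hxj⟩]
          have h2 : (addOrderOf x : ℝ) ≤ (p : ℝ) ^ j * q := by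
            exact_mod_cast Nat.le_of_dvd (Nat.mul_pos (pow_pos hp.pos j) hq.pos)
              (addOrderOf_dvd_of_nsmul_eq_zero hxj)
          have h3 := one_div_le_one_div_of_le (hop x) h2
          rw [min_eq_right h3, min_eq_right (by linarith), hc]
          linarith
        · rw [if_neg (fun h => hxj h.2), add_zero]
          refine le_min (min_le_left _ _) ((min_le_left _ _).trans ?_)
          apply one_div_le_one_div_of_le (by positivity)
          have hd := addOrderOf_dvd_of_nsmul_eq_zero (hN x)
          obtain ⟨a, b, ha, hb, hab⟩ := exists_dvd_and_dvd_of_dvd_mul hd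
          obtain ⟨i, hi, rfl⟩ := (Nat.dvd_prime_pow hp).1 ha
          rcases (Nat.dvd_prime hq).1 hb with rfl | rfl
          · exfalso
            apply hx
            apply addOrderOf_dvd_iff_nsmul_eq_zero.1
            rw [hab, mul_one]
            exact ha
          · have hij : j + 1 ≤ i := by
              by_contra hlt
              apply hxj
              apply addOrderOf_dvd_iff_nsmul_eq_zero.1
              rw [hab]
              exact Nat.mul_dvd_mul_right (pow_dvd_pow p (by omega)) _
            rw [hab]
            have : (p ^ (j + 1) * b : ℕ) ≤ p ^ i * b :=
              Nat.mul_le_mul_right _ (Nat.pow_le_pow_right hp.pos hij)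
            exact_mod_cast this
    have h2 : ∑ i ∈ s', tw p q m j (f' i) ≤ ∑ i ∈ s', tw p q m (j + 1) (f' i) + q * c := by
      calc _ ≤ ∑ i ∈ s', (tw p q m (j + 1) (f' i) +
            if p ^ m • f' i ≠ 0 ∧ (p ^ j * q) • f' i = 0 then c else 0) :=
            sum_le_sum (fun i _ => hpt (f' i))
        _ = ∑ i ∈ s', tw p q m (j + 1) (f' i) +
            (#{i ∈ s' | p ^ m • f' i ≠ 0 ∧ (p ^ j * q) • f' i = 0} : ℝ) * c := by
            rw [sum_add_distrib, ← sum_filter, sum_const, nsmul_eq_mul]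
        _ ≤ _ := by gcongr
    have h3 : q * c = 1 / (p : ℝ) ^ j - 1 / (p : ℝ) ^ (j + 1) := by
      rw [hc]; field_simp
    linarith

lemma upper {ι G : Type*} [DecidableEq ι] [AddCommGroup G] [Fintype G] [DecidableEq G]
    (p q : ℕ) (hp : p.Prime) (hq : q.Prime) (hpq : p ≠ q) (m : ℕ)
    (hcp : #{x : G | p • x = 0} ≤ p) (hcq : #{x : G | q • x = 0} ≤ q)
    (hN : ∀ x : G, (p ^ m * q) • x = 0) (s : Finset ι) (f : ι → G) (hg : Good s f) :
    ∑ i ∈ s, (1 : ℝ) / (addOrderOf (f i) : ℝ) ≤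
        ∑ j ∈ range m, (1 : ℝ) / (p : ℝ) ^ j + 1 := by
  have h := boundQ (ι := ι) p q hp hq hpq m hcp hcq hN m 0 (by omega) s f hg
  have hq0 : (0 : ℝ) < q := by exact_mod_cast hq.pos
  refine le_trans (sum_le_sum ?_) (h.trans (by simp))
  intro i _
  rw [tw]
  split_ifs with hx
  · exact le_rfl
  · refine le_min le_rfl ?_
    apply one_div_le_one_div_of_le (by positivity)
    rw [pow_zero, one_mul]
    have hd := addOrderOf_dvd_of_nsmul_eq_zero (hN (f i))
    have : q ∣ addOrderOf (f i) := by
      by_contra hnd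
      apply hx
      apply addOrderOf_dvd_iff_nsmul_eq_zero.1
      exact (((Nat.Prime.coprime_iff_not_dvd hq).2 hnd).symm).dvd_of_dvd_mul_right hd
    exact_mod_cast Nat.le_of_dvd (addOrderOf_pos _) this

/-! Lower bound -/

lemma Good.extend {ι G : Type*} [DecidableEq ι] [AddCommGroup G] {s T : Finset ι} {f : ι → G}
    (hg : Good s f) (n : ℕ) (hn : ∀ i ∈ s, n • f i = 0) (hd : Disjoint s T)
    (hT0 : ∀ i ∈ T, f i ≠ 0) (hT : ∑ i ∈ T, f i = 0)
    (hJ : ∀ J ⊆ T, n • ∑ i ∈ J, f i = 0 → J = ∅ ∨ J = T) : Good (s ∪ T) f := by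
  have key : ∀ I ⊆ s ∪ T, ∑ i ∈ I, f i = 0 → (I ∩ T = ∅ ∨ I ∩ T = T) ∧
      ∑ i ∈ I ∩ s, f i = 0 := by
    intro I hI hz
    have hsplit : ∑ i ∈ I, f i = ∑ i ∈ I ∩ s, f i + ∑ i ∈ I ∩ T, f i := by
      rw [← sum_union (hd.mono inter_subset_right inter_subset_right),
        ← inter_union_distrib_left, inter_eq_left.2 hI]
    have h1 : n • ∑ i ∈ I ∩ s, f i = 0 := by
      rw [smul_sum]
      exact sum_eq_zero (fun i hi => hn i (mem_inter.1 hi).2)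
    have h2 : n • ∑ i ∈ I ∩ T, f i = 0 := by
      have := congrArg (fun x => n • x) hsplit
      simp only [smul_add, h1, hz, smul_zero, zero_add] at this
      exact this.symm
    have h3 := hJ _ inter_subset_right h2
    refine ⟨h3, ?_⟩
    have h4 : ∑ i ∈ I ∩ T, f i = 0 := by
      rcases h3 with h | h
      · rw [h, sum_empty]
      · rw [h, hT]
    rw [h4, add_zero, hz] at hsplit
    exact hsplit.symm
  refine ⟨?_, ?_, ?_⟩
  · intro i hi
    rcases mem_union.1 hi with h | h
    · exact hg.1 i h
    · exact hT0 i h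
  · rw [sum_union hd, hg.2.1, hT, add_zero]
  · intro I J hI hJ hIz hJz
    obtain ⟨a1, a2⟩ := key I hI hIz
    obtain ⟨b1, b2⟩ := key J hJ hJz
    have hsub : I ∩ J ⊆ s ∪ T := inter_subset_left.trans hI
    have hsplit : ∑ i ∈ I ∩ J, f i = ∑ i ∈ (I ∩ J) ∩ s, f i + ∑ i ∈ (I ∩ J) ∩ T, f i := by
      rw [← sum_union (hd.mono inter_subset_right inter_subset_right),
        ← inter_union_distrib_left, inter_eq_left.2 hsub]
    have e1 : (I ∩ J) ∩ s = (I ∩ s) ∩ (J ∩ s) := by grind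
    have e2 : (I ∩ J) ∩ T = (I ∩ T) ∩ (J ∩ T) := by grind
    rw [hsplit, e1, hg.2.2 _ _ inter_subset_right inter_subset_right a2 b2, e2, zero_add]
    rcases a1 with a | a <;> rcases b1 with b | b <;> rw [a, b] <;> simp [hT]

/-- The extremal family: level `k` uses `g k` and closing element `-(r k - 1) • g k`. -/
def lowf {G : Type*} [AddCommGroup G] (g : ℕ → G) (r : ℕ → ℕ) (x : ℕ × ℕ) : G :=
  if x.2 = 0 then -((r x.1 - 1) • g x.1) else g x.1

def lows (r : ℕ → ℕ) : ℕ → Finset (ℕ × ℕ)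
  | 0 => ∅
  | k + 1 => lows r k ∪ ({k} ×ˢ range (r k))

lemma lows_lt (r : ℕ → ℕ) (k : ℕ) : ∀ x ∈ lows r k, x.1 < k := by
  induction k with
  | zero => simp [lows]
  | succ k ih =>
    intro x hx
    simp only [lows, mem_union, mem_product, mem_singleton] at hx
    rcases hx with h | h
    · have := ih x h; omega
    · omega

lemma low_good {G : Type*} [AddCommGroup G] (g : ℕ → G) (r n : ℕ → ℕ) (M : ℕ)
    (hr : ∀ k < M, (r k).Prime)
    (hk : ∀ k < M, n k • g k ≠ 0 ∧ r k • (n k • g k) = 0)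
    (hcop : ∀ k < M, Nat.Coprime (addOrderOf (g k)) (r k - 1))
    (hn : ∀ k < M, ∀ j < k, n k • g j = 0) :
    ∀ k ≤ M, Good (lows r k) (lowf g r) ∧
      ∑ x ∈ lows r k, (1 : ℝ) / (addOrderOf (lowf g r x) : ℝ) =
        ∑ j ∈ range k, (r j : ℝ) / (addOrderOf (g j) : ℝ) := by
  intro k
  induction k with
  | zero =>
    intro _
    refine ⟨⟨by simp [lows], by simp [lows], ?_⟩, by simp [lows]⟩
    intro I J hI hJ _ _
    have : I = ∅ := subset_empty.1 (by simpa [lows] using hI)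
    simp [this]
  | succ k ih =>
    intro hkM
    obtain ⟨ih1, ih2⟩ := ih (by omega)
    have hrk := hr k (by omega)
    obtain ⟨hk1, hk2⟩ := hk k (by omega)
    have hord : addOrderOf (n k • g k) = r k := by
      have := Fact.mk hrk
      exact addOrderOf_eq_prime hk2 hk1
    have hgk : g k ≠ 0 := by rintro h; rw [h] at hk1; simp at hk1
    have hordT : ∀ x ∈ ({k} : Finset ℕ) ×ˢ range (r k),
        addOrderOf (lowf g r x) = addOrderOf (g k) := by
      rintro ⟨a, b⟩ hx
      simp only [mem_product, mem_singleton] at hx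
      obtain ⟨rfl, _⟩ := hx
      simp only [lowf]
      split_ifs
      · rw [addOrderOf_neg]
        exact (hcop a (by omega)).addOrderOf_nsmul
      · rfl
    have hnT : ∀ x ∈ ({k} : Finset ℕ) ×ˢ range (r k), n k • lowf g r x = n k • g k := by
      rintro ⟨a, b⟩ hx
      simp only [mem_product, mem_singleton] at hx
      obtain ⟨rfl, _⟩ := hx
      simp only [lowf]
      split_ifs
      · rw [smul_neg, smul_comm, neg_eq_iff_add_eq_zero, ← succ_nsmul]
        rw [Nat.sub_add_cancel hrk.one_le]
        exact hk2
      · rfl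
    have hdis : Disjoint (lows r k) (({k} : Finset ℕ) ×ˢ range (r k)) := by
      rw [disjoint_left]
      intro x hx hx'
      have := lows_lt r k x hx
      simp only [mem_product, mem_singleton] at hx'
      omega
    constructor
    · apply ih1.extend (n k) _ hdis
      · intro x hx h0
        apply hk1
        rw [← hnT x hx, h0, smul_zero]
      · rw [sum_product, sum_singleton]
        obtain ⟨t, ht⟩ : ∃ t, r k = t + 1 := ⟨r k - 1, by have := hrk.one_le; omega⟩
        rw [ht, sum_range_succ']
        simp [lowf, ht]
      · intro J hJ hz
        rw [smul_sum, sum_congr rfl (fun x hx => hnT x (hJ hx)), sum_const] at hz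
        have hd := addOrderOf_dvd_of_nsmul_eq_zero hz
        rw [hord] at hd
        have hcT : #(({k} : Finset ℕ) ×ˢ range (r k)) = r k := by simp
        rcases Nat.eq_zero_or_pos #J with h | h
        · left; exact card_eq_zero.1 h
        · right
          exact eq_of_subset_of_card_le hJ (by rw [hcT]; exact Nat.le_of_dvd h hd)
      · intro x hx
        have hlt := lows_lt r k x hx
        have := hn k (by omega) x.1 hlt
        simp only [lowf]
        split_ifs
        · rw [smul_neg, smul_comm, this]; simp
        · exact this
    · rw [lows, sum_union hdis, ih2, sum_range_succ]
      congr 1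
      rw [sum_congr rfl (fun x hx => by rw [hordT x hx]), sum_const]
      simp [div_eq_mul_inv]

lemma Good.transfer {ι G : Type*} [DecidableEq ι] [AddCommGroup G] {s : Finset ι} {f : ι → G}
    (hg : Good s f) : ∃ g : Fin #s → G, Good univ g ∧
      ∑ i, (1 : ℝ) / (addOrderOf (g i) : ℝ) = ∑ i ∈ s, (1 : ℝ) / (addOrderOf (f i) : ℝ) := by
  let e : Fin #s ↪ ι := s.equivFin.symm.toEmbedding.trans (Function.Embedding.subtype _)
  have he : ∀ i, e i ∈ s := fun i => (s.equivFin.symm i).2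
  have hu : univ.map e = s := by
    apply eq_of_subset_of_card_le
    · intro x hx
      obtain ⟨i, _, rfl⟩ := mem_map.1 hx
      exact he i
    · simp
  have hsub : ∀ I : Finset (Fin #s), I.map e ⊆ s := by
    intro I x hx
    obtain ⟨i, _, rfl⟩ := mem_map.1 hx
    exact he i
  have hs : ∀ I : Finset (Fin #s), ∑ i ∈ I, f (e i) = ∑ x ∈ I.map e, f x := by
    intro I; rw [sum_map]
  refine ⟨fun i => f (e i), ⟨fun i _ => hg.1 _ (he i), ?_, ?_⟩, ?_⟩
  · rw [hs, hu]; exact hg.2.1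
  · intro I J _ _ hI hJ
    rw [hs] at hI hJ ⊢
    rw [map_inter]
    exact hg.2.2 _ _ (hsub I) (hsub J) hI hJ
  · conv_rhs => rw [← hu, sum_map]

/-- `K₁(C_{p^m} ⊕ C_q) = Σ_{k=1}^m 1/p^{k−1} + 1 = (p^m − 1)/(p^m − p^{m−1}) + 1`
for distinct primes `p, q`. -/
theorem K1_pm_q (p q : ℕ) (hp : p.Prime) (hq : q.Prime) (hpq : p ≠ q)
    (m : ℕ) (hm : 1 ≤ m) :
    K1 (ZMod (p ^ m) × ZMod q) = (∑ k ∈ Finset.range m, (1 : ℝ) / (p : ℝ) ^ k) + 1 ∧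
    K1 (ZMod (p ^ m) × ZMod q) =
      ((p : ℝ) ^ m - 1) / ((p : ℝ) ^ m - (p : ℝ) ^ (m - 1)) + 1 := by
  have hp0 : (0 : ℝ) < p := by exact_mod_cast hp.pos
  have hp1 : (1 : ℝ) < p := by exact_mod_cast hp.one_lt
  have hq0 : (0 : ℝ) < q := by exact_mod_cast hq.pos
  have hcop : Nat.Coprime p q := (Nat.coprime_primes hp hq).2 hpq
  have : NeZero (p ^ m) := ⟨(pow_pos hp.pos m).ne'⟩
  have : NeZero q := ⟨hq.ne_zero⟩
  have hcyc : IsAddCyclic (ZMod (p ^ m) × ZMod q) := by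
    have e := (ZMod.chineseRemainder (hcop.pow_left m)).toAddEquiv
    exact isAddCyclic_of_surjective e.toAddMonoidHom e.surjective
  have hcard : Nat.card (ZMod (p ^ m) × ZMod q) = p ^ m * q := by
    rw [Nat.card_prod, Nat.card_zmod, Nat.card_zmod]
  have hN : ∀ x : ZMod (p ^ m) × ZMod q, (p ^ m * q) • x = 0 := by
    intro x
    rw [← hcard]
    exact card_nsmul_eq_zero'
  have hex : ∀ d, d ∣ p ^ m * q → ∃ x : ZMod (p ^ m) × ZMod q, addOrderOf x = d := by
    intro d hd
    obtain ⟨g, hg⟩ := IsAddCyclic.exists_ofOrder_eq_natCard (α := ZMod (p ^ m) × ZMod q)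
    rw [hcard] at hg
    obtain ⟨c, hc⟩ := hd
    have hpos : 0 < p ^ m * q := Nat.mul_pos (pow_pos hp.pos m) hq.pos
    have hc0 : c ≠ 0 := by rintro rfl; omega
    refine ⟨c • g, ?_⟩
    rw [addOrderOf_nsmul_of_dvd hc0 (by rw [hg, hc]; exact dvd_mul_left _ _), hg, hc]
    exact Nat.mul_div_cancel _ (Nat.pos_of_ne_zero hc0)
  have main : K1 (ZMod (p ^ m) × ZMod q) =
      (∑ k ∈ Finset.range m, (1 : ℝ) / (p : ℝ) ^ k) + 1 := by
    apply IsGreatest.csSup_eq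
    constructor
    · choose! G0 hG0 using hex
      let r : ℕ → ℕ := fun k => if k < m then p else q
      let n : ℕ → ℕ := fun k => p ^ k
      let g : ℕ → ZMod (p ^ m) × ZMod q := fun k => if k < m then G0 (p ^ (k + 1)) else G0 q
      have og : ∀ k < m, addOrderOf (g k) = p ^ (k + 1) := by
        intro k hk
        simp only [g, if_pos hk]
        exact hG0 _ (Dvd.dvd.mul_right (pow_dvd_pow p hk) q)
      have ogm : addOrderOf (g m) = q := by
        simp only [g, lt_irrefl, if_false]
        exact hG0 _ (dvd_mul_left _ _)
      have hco : ∀ t : ℕ, t.Prime → Nat.Coprime t (t - 1) := by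
        intro t ht
        have h1 := ht.one_le
        have := Nat.coprime_self_add_right (m := t - 1) (n := 1)
        rw [Nat.coprime_comm]
        have h2 : t = t - 1 + 1 := by omega
        rw [h2]
        simp
      obtain ⟨hgood, hsum⟩ := low_good g r n (m + 1)
        (by intro k _; simp only [r]; split_ifs <;> assumption)
        (by
          intro k hk
          by_cases hkm : k < m
          · simp only [r, n, if_pos hkm]
            rw [ne_eq, ← addOrderOf_dvd_iff_nsmul_eq_zero, smul_smul,
              ← addOrderOf_dvd_iff_nsmul_eq_zero, og k hkm]
            refine ⟨?_, by rw [pow_succ']⟩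
            intro h
            have := (Nat.pow_dvd_pow_iff_le_right hp.one_lt).1 h
            omega
          · obtain rfl : k = m := by omega
            simp only [r, n, if_neg hkm]
            rw [ne_eq, ← addOrderOf_dvd_iff_nsmul_eq_zero, smul_smul,
              ← addOrderOf_dvd_iff_nsmul_eq_zero, ogm]
            refine ⟨?_, dvd_mul_right _ _⟩
            intro h
            exact hpq ((Nat.prime_dvd_prime_iff_eq hq hp).1 (hq.dvd_of_dvd_pow h)).symm)
        (by
          intro k hk
          by_cases hkm : k < m
          · simp only [r, if_pos hkm]
            rw [og k hkm]
            exact (hco p hp).pow_left _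
          · obtain rfl : k = m := by omega
            simp only [r, if_neg hkm]
            rw [ogm]
            exact hco q hq)
        (by
          intro k hk j hj
          simp only [n]
          rw [← addOrderOf_dvd_iff_nsmul_eq_zero, og j (by omega)]
          exact pow_dvd_pow p hj)
        (m + 1) le_rfl
      obtain ⟨g', hg', hs'⟩ := hgood.transfer
      refine ⟨_, g', (good_iff_UFIM g').2 hg', ?_⟩
      rw [crossNum, hs', hsum, sum_range_succ, ogm]
      congr 1
      · apply sum_congr rfl
        intro k hk
        rw [mem_range] at hk
        rw [og k hk]
        simp only [r, if_pos hk]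
        push_cast
        rw [pow_succ]
        field_simp
      · simp only [r, lt_irrefl, if_false]
        field_simp
    · rintro x ⟨ℓ, g, hg, rfl⟩
      classical
      exact upper p q hp hq hpq m (IsAddCyclic.card_nsmul_eq_zero_le hp.pos)
        (IsAddCyclic.card_nsmul_eq_zero_le hq.pos) hN univ g ((good_iff_UFIM g).1 hg)
  refine ⟨main, main.trans ?_⟩
  congr 1
  obtain ⟨t, rfl⟩ : ∃ t, m = t + 1 := ⟨m - 1, by omega⟩
  have h1 : ∑ k ∈ range (t + 1), (1 : ℝ) / (p : ℝ) ^ k = ∑ k ∈ range (t + 1), ((p : ℝ)⁻¹) ^ k := by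
    apply sum_congr rfl; intro k _; rw [inv_pow, one_div]
  have hne : (p : ℝ)⁻¹ ≠ 1 := by
    intro h
    rw [inv_eq_one] at h
    linarith
  rw [h1, geom_sum_eq hne, Nat.add_sub_cancel, inv_pow]
  have h2 : (1 - (p : ℝ)) ≠ 0 := by linarith
  have h3 : ((p : ℝ) - 1) ≠ 0 := by linarith
  have h4 : (p : ℝ)⁻¹ - 1 ≠ 0 := sub_ne_zero.2 hne
  have h5 : (p : ℝ) ^ (t + 1) - (p : ℝ) ^ t ≠ 0 := by
    have : (p : ℝ) ^ (t + 1) - (p : ℝ) ^ t = (p : ℝ) ^ t * (p - 1) := by ring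
    rw [this]; positivity
  rw [div_eq_div_iff h4 h5]
  field_simp
  ring
end
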